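/- arXiv:2008.13352 — 14 statements merged into one kernel-verified Lean document; each statement's English description precedes it below -/
import Mathlib

section
/- Let I ⊆ ℝ be an open interval, u = (u₁,u₂) a pair of functions I → ℂ, ζ₁ ≠ ζ₂ complex numbers, ψ₁ a ζ₁-wave and ψ₂ a ζ₂-wave for u such that the Wronskian W(ψ₂,ψ₁) vanishes nowhere on I. Then: (i) D(u,(ζ₁,ζ₂),(ψ₁,ψ₂))ψ₁ = 0 and D(u,(ζ₁,ζ₂),(ψ₁,ψ₂))ψ₂ = 0 at every point of I; and (ii) the intertwining operator is symmetric under exchanging the indices, i.e. for every differentiable φ : I → ℂ², D(u,(ζ₂,ζ₁),(ψ₂,ψ₁))φ = D(u,(ζ₁,ζ₂),(ψ₁,ψ₂))φ on I. -/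
noncomputable section

/-- Wronskian of two `ℂ²`-valued functions: `W(φ,ψ) = φ₁ψ₂ − φ₂ψ₁`. -/
def Wr (φ ψ : ℝ → ℂ × ℂ) (x : ℝ) : ℂ := (φ x).1 * (ψ x).2 - (φ x).2 * (ψ x).1

/-- A ζ-wave for the pair `u = (u₁,u₂)` on the set `I`:
a differentiable solution of the Zakharov–Shabat system
`ψ₁' = −iζψ₁ + u₁ψ₂`, `ψ₂' = iζψ₂ − u₂ψ₁` on `I`. -/
def IsWave (I : Set ℝ) (u₁ u₂ : ℝ → ℂ) (ζ : ℂ) (ψ : ℝ → ℂ × ℂ) : Prop :=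
  ∀ x ∈ I,
    HasDerivAt (fun y => (ψ y).1) (-Complex.I * ζ * (ψ x).1 + u₁ x * (ψ x).2) x ∧
    HasDerivAt (fun y => (ψ y).2) (Complex.I * ζ * (ψ x).2 - u₂ x * (ψ x).1) x

/-- The Lax expression `L(u)φ = (i(φ₁' − u₁φ₂), −i(u₂φ₁ + φ₂'))`. -/
def Lax (u₁ u₂ : ℝ → ℂ) (φ : ℝ → ℂ × ℂ) (x : ℝ) : ℂ × ℂ :=
  (Complex.I * (deriv (fun y => (φ y).1) x - u₁ x * (φ x).2),
   -Complex.I * (u₂ x * (φ x).1 + deriv (fun y => (φ y).2) x))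

/-- The intertwining operator
`D(u,(ζ₁,ζ₂),(ψ₁,ψ₂))φ = (L(u) − ζ₂)φ + (ζ₂ − ζ₁)·(W(ψ₂,φ)/W(ψ₂,ψ₁))·ψ₁`. -/
def Dop (u₁ u₂ : ℝ → ℂ) (ζ₁ ζ₂ : ℂ) (ψ₁ ψ₂ φ : ℝ → ℂ × ℂ) (x : ℝ) : ℂ × ℂ :=
  Lax u₁ u₂ φ x - ζ₂ • φ x + ((ζ₂ - ζ₁) * Wr ψ₂ φ x / Wr ψ₂ ψ₁ x) • ψ₁ x

/-- On a ζ-wave, the Lax expression acts as multiplication by ζ. -/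
theorem lax_wave {I : Set ℝ} {u₁ u₂ : ℝ → ℂ} {ζ : ℂ} {ψ : ℝ → ℂ × ℂ}
    (h : IsWave I u₁ u₂ ζ ψ) {x : ℝ} (hx : x ∈ I) : Lax u₁ u₂ ψ x = ζ • ψ x := by
  obtain ⟨h1, h2⟩ := h x hx
  ext
  · simp only [Lax, h1.deriv, Prod.smul_fst, smul_eq_mul]
    linear_combination (-ζ * (ψ x).1) * Complex.I_mul_I
  · simp only [Lax, h2.deriv, Prod.smul_snd, smul_eq_mul]
    linear_combination (-ζ * (ψ x).2) * Complex.I_mul_I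

/-- on an open interval `I`, if `ψ₁` is a `ζ₁`-wave and `ψ₂` a `ζ₂`-wave
for `u` with nowhere vanishing Wronskian `W(ψ₂,ψ₁)`, then
(i) `D(u,(ζ₁,ζ₂),(ψ₁,ψ₂))` annihilates `ψ₁` and `ψ₂` on `I`, and
(ii) the intertwining operator is symmetric under exchanging the indices. -/
theorem statement0 (a b : ℝ) (I : Set ℝ) (hI : I = Set.Ioo a b)
    (u₁ u₂ : ℝ → ℂ) (ζ₁ ζ₂ : ℂ) (hζ : ζ₁ ≠ ζ₂)
    (ψ₁ ψ₂ : ℝ → ℂ × ℂ)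
    (h₁ : IsWave I u₁ u₂ ζ₁ ψ₁) (h₂ : IsWave I u₁ u₂ ζ₂ ψ₂)
    (hW : ∀ x ∈ I, Wr ψ₂ ψ₁ x ≠ 0) :
    (∀ x ∈ I, Dop u₁ u₂ ζ₁ ζ₂ ψ₁ ψ₂ ψ₁ x = 0 ∧ Dop u₁ u₂ ζ₁ ζ₂ ψ₁ ψ₂ ψ₂ x = 0) ∧
    (∀ φ : ℝ → ℂ × ℂ,
      (∀ x ∈ I, DifferentiableAt ℝ (fun y => (φ y).1) x ∧
                 DifferentiableAt ℝ (fun y => (φ y).2) x) →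
      ∀ x ∈ I, Dop u₁ u₂ ζ₂ ζ₁ ψ₂ ψ₁ φ x = Dop u₁ u₂ ζ₁ ζ₂ ψ₁ ψ₂ φ x) := by
  refine ⟨fun x hx => ⟨?_, ?_⟩, fun φ _ x hx => ?_⟩
  · rw [Dop, lax_wave h₁ hx, mul_div_assoc, div_self (hW x hx)]
    module
  · have h0 : Wr ψ₂ ψ₂ x = 0 := by simp only [Wr]; ring
    rw [Dop, lax_wave h₂ hx, h0]
    simp
  · have hw := hW x hx
    have e : Wr ψ₁ ψ₂ x = -Wr ψ₂ ψ₁ x := by simp only [Wr]; ring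
    ext
    · simp only [Dop, e, Prod.fst_add, Prod.fst_sub, Prod.smul_fst, smul_eq_mul]
      field_simp
      simp only [Wr]
      ring
    · simp only [Dop, e, Prod.snd_add, Prod.snd_sub, Prod.smul_snd, smul_eq_mul]
      field_simp
      simp only [Wr]
      ring
end
end

section
/- Let I ⊆ ℝ be an open interval, u = (u₁,u₂) a pair of differentiable functions I → ℂ, ζ₁ ≠ ζ₂ complex numbers, ψ₁ a ζ₁-wave and ψ₂ a ζ₂-wave for u with W(ψ₂,ψ₁) nowhere vanishing on I, and set v = B(u,(ζ₁,ζ₂),(ψ₁,ψ₂)). Then the intertwining relation L(v)(Dφ) = D(L(u)φ) holds on I for every twice differentiable φ : I → ℂ², where D = D(u,(ζ₁,ζ₂),(ψ₁,ψ₂)). -/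
noncomputable section

/-- with `v = B(u,(ζ₁,ζ₂),(ψ₁,ψ₂))` the Bäcklund transform, the
intertwining relation `L(v)(Dφ) = D(L(u)φ)` holds on `I` for every twice
differentiable `φ`, where `D = D(u,(ζ₁,ζ₂),(ψ₁,ψ₂))`. -/
theorem statement1 (a b : ℝ) (I : Set ℝ) (hI : I = Set.Ioo a b)
    (u₁ u₂ : ℝ → ℂ)
    (hu : ∀ x ∈ I, DifferentiableAt ℝ u₁ x ∧ DifferentiableAt ℝ u₂ x)
    (ζ₁ ζ₂ : ℂ) (hζ : ζ₁ ≠ ζ₂)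
    (ψ₁ ψ₂ : ℝ → ℂ × ℂ)
    (h₁ : IsWave I u₁ u₂ ζ₁ ψ₁) (h₂ : IsWave I u₁ u₂ ζ₂ ψ₂)
    (hW : ∀ x ∈ I, Wr ψ₂ ψ₁ x ≠ 0)
    (v₁ v₂ : ℝ → ℂ)
    (hv₁ : ∀ x, v₁ x = u₁ x + 2 * Complex.I * (ζ₂ - ζ₁) * (ψ₁ x).1 * (ψ₂ x).1 / Wr ψ₂ ψ₁ x)
    (hv₂ : ∀ x, v₂ x = u₂ x - 2 * Complex.I * (ζ₂ - ζ₁) * (ψ₁ x).2 * (ψ₂ x).2 / Wr ψ₂ ψ₁ x)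
    (φ : ℝ → ℂ × ℂ)
    (hφ : ∀ x ∈ I,
      DifferentiableAt ℝ (fun y => (φ y).1) x ∧
      DifferentiableAt ℝ (fun y => (φ y).2) x ∧
      DifferentiableAt ℝ (deriv (fun y => (φ y).1)) x ∧
      DifferentiableAt ℝ (deriv (fun y => (φ y).2)) x) :
    ∀ x ∈ I,
      Lax v₁ v₂ (Dop u₁ u₂ ζ₁ ζ₂ ψ₁ ψ₂ φ) x
        = Dop u₁ u₂ ζ₁ ζ₂ ψ₁ ψ₂ (Lax u₁ u₂ φ) x := by
  intro x hx
  obtain ⟨hu1, hu2⟩ := hu x hx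
  obtain ⟨hp1, hp2⟩ := h₁ x hx
  obtain ⟨hq1, hq2⟩ := h₂ x hx
  obtain ⟨hf1, hf2, hg1, hg2⟩ := hφ x hx
  have hw := hW x hx
  have du1 := hu1.hasDerivAt
  have du2 := hu2.hasDerivAt
  have df1 := hf1.hasDerivAt
  have df2 := hf2.hasDerivAt
  have dg1 := hg1.hasDerivAt
  have dg2 := hg2.hasDerivAt
  have dW := (hq1.fun_mul hp2).fun_sub (hq2.fun_mul hp1)
  have dV := (hq1.fun_mul df2).fun_sub (hq2.fun_mul df1)
  have dQ := (dV.const_mul (ζ₂ - ζ₁)).fun_div dW hw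
  have dL1 := (dg1.fun_sub (du1.fun_mul df2)).const_mul Complex.I
  have dL2 := ((du2.fun_mul df1).fun_add dg2).const_mul (-Complex.I)
  have dD1 := (dL1.fun_sub (df1.const_mul ζ₂)).fun_add (dQ.fun_mul hp1)
  have dD2 := (dL2.fun_sub (df2.const_mul ζ₂)).fun_add (dQ.fun_mul hp2)
  have eD1 := dD1.deriv
  have eD2 := dD2.deriv
  have eL1 := dL1.deriv
  have eL2 := dL2.deriv
  clear dD1 dD2 dL1 dL2 dQ dV dW hp1 hp2 hq1 hq2 hf1 hf2 hg1 hg2 df1 df2 dg1 dg2 du1 du2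
  have hI2 : Complex.I ^ 2 = -1 := Complex.I_sq
  unfold Wr at hw
  ext
  · simp only [Lax, Dop, Wr, Prod.fst_add, Prod.fst_sub, Prod.snd_add, Prod.snd_sub,
      Prod.smul_fst, Prod.smul_snd, smul_eq_mul, hv₁, hv₂]
    rw [eD1, eL1]
    clear eD1 eL1 eL2 eD2 hv₁ hv₂ h₁ h₂ hW hφ hu
    generalize Complex.I = i at *
    generalize deriv (deriv (fun y => (φ y).1)) x = ddf at *
    generalize deriv (fun y => (φ y).1) x = df at *
    generalize deriv (fun y => (φ y).2) x = dh at *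
    generalize (φ x).1 = f1 at *
    generalize (φ x).2 = f2 at *
    generalize (ψ₁ x).1 = p1 at *
    generalize (ψ₁ x).2 = p2 at *
    generalize (ψ₂ x).1 = q1 at *
    generalize (ψ₂ x).2 = q2 at *
    generalize hweq : q1 * p2 - q2 * p1 = w at hw ⊢
    field_simp
    subst hweq
    ring_nf
    simp only [show i ^ 3 = -i by linear_combination i * hI2, show i^4 = 1 by linear_combination (i^2-1) * hI2, hI2]
    ring
  · simp only [Lax, Dop, Wr, Prod.fst_add, Prod.fst_sub, Prod.snd_add, Prod.snd_sub,
      Prod.smul_fst, Prod.smul_snd, smul_eq_mul, hv₁, hv₂]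
    rw [eD2, eL2]
    clear eD1 eL1 eL2 eD2 hv₁ hv₂ h₁ h₂ hW hφ hu
    generalize Complex.I = i at *
    generalize deriv (deriv (fun y => (φ y).2)) x = ddf at *
    generalize deriv (fun y => (φ y).1) x = df at *
    generalize deriv (fun y => (φ y).2) x = dh at *
    generalize (φ x).1 = f1 at *
    generalize (φ x).2 = f2 at *
    generalize (ψ₁ x).1 = p1 at *
    generalize (ψ₁ x).2 = p2 at *
    generalize (ψ₂ x).1 = q1 at *
    generalize (ψ₂ x).2 = q2 at *
    generalize hweq : q1 * p2 - q2 * p1 = w at hw ⊢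
    field_simp
    subst hweq
    ring_nf
    simp only [show i ^ 3 = -i by linear_combination i * hI2, show i^4 = 1 by linear_combination (i^2-1) * hI2, hI2]
    ring
end
end

section
/- Let I ⊆ ℝ be an open interval, u = (u₁,u₂) a pair of functions I → ℂ, ζ₁ ≠ ζ₂ complex numbers, ψ₁ a ζ₁-wave and ψ₂ a ζ₂-wave for u with W(ψ₂,ψ₁) nowhere vanishing on I, and set v = B(u,(ζ₁,ζ₂),(ψ₁,ψ₂)). Then for every z ∈ ℂ, the intertwining operator D(u,(ζ₁,ζ₂),(ψ₁,ψ₂)) maps z-waves for u to z-waves for v: if φ is a z-wave for u on I, then Dφ = (z − ζ₂)φ + (ζ₂ − ζ₁)(W(ψ₂,φ)/W(ψ₂,ψ₁))ψ₁ is a z-wave for v on I. -/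
noncomputable section

/-- with `v = B(u,(ζ₁,ζ₂),(ψ₁,ψ₂))` the Bäcklund transform, for every
`z ∈ ℂ` the intertwining operator maps `z`-waves for `u` to `z`-waves for `v`:
if `φ` is a `z`-wave for `u` on `I` then
`Dφ = (z − ζ₂)φ + (ζ₂ − ζ₁)(W(ψ₂,φ)/W(ψ₂,ψ₁))ψ₁` is a `z`-wave for `v` on `I`. -/
theorem statement2 (a b : ℝ) (I : Set ℝ) (hI : I = Set.Ioo a b)
    (u₁ u₂ : ℝ → ℂ) (ζ₁ ζ₂ : ℂ) (hζ : ζ₁ ≠ ζ₂)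
    (ψ₁ ψ₂ : ℝ → ℂ × ℂ)
    (h₁ : IsWave I u₁ u₂ ζ₁ ψ₁) (h₂ : IsWave I u₁ u₂ ζ₂ ψ₂)
    (hW : ∀ x ∈ I, Wr ψ₂ ψ₁ x ≠ 0)
    (v₁ v₂ : ℝ → ℂ)
    (hv₁ : ∀ x, v₁ x = u₁ x + 2 * Complex.I * (ζ₂ - ζ₁) * (ψ₁ x).1 * (ψ₂ x).1 / Wr ψ₂ ψ₁ x)
    (hv₂ : ∀ x, v₂ x = u₂ x - 2 * Complex.I * (ζ₂ - ζ₁) * (ψ₁ x).2 * (ψ₂ x).2 / Wr ψ₂ ψ₁ x)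
    (z : ℂ) (φ : ℝ → ℂ × ℂ) (hφ : IsWave I u₁ u₂ z φ) :
    IsWave I v₁ v₂ z
      (fun x => (z - ζ₂) • φ x + ((ζ₂ - ζ₁) * Wr ψ₂ φ x / Wr ψ₂ ψ₁ x) • ψ₁ x) := by
  intro x hx
  obtain ⟨hf, hg⟩ := hφ x hx
  obtain ⟨ha, hb⟩ := h₁ x hx
  obtain ⟨hp, hq⟩ := h₂ x hx
  have hV := hW x hx
  have hWφ := (hp.mul hg).sub (hq.mul hf)
  have hWψ := (hp.mul hb).sub (hq.mul ha)
  have hR := (hWφ.const_mul (ζ₂ - ζ₁)).div hWψ hV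
  have e1 := hv₁ x
  have e2 := hv₂ x
  unfold Wr at hV e1 e2
  constructor
  · refine ((hf.const_mul (z - ζ₂)).add (hR.mul ha)).congr_deriv ?_
    simp only [e1, Wr, Prod.fst_add, Prod.snd_add, Prod.smul_fst, Prod.smul_snd, smul_eq_mul,
      Pi.mul_apply, Pi.sub_apply, Pi.div_apply]
    field_simp
    ring
  · refine ((hg.const_mul (z - ζ₂)).add (hR.mul hb)).congr_deriv ?_
    simp only [e2, Wr, Prod.fst_add, Prod.snd_add, Prod.smul_fst, Prod.smul_snd, smul_eq_mul,
      Pi.mul_apply, Pi.sub_apply, Pi.div_apply]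
    field_simp
    ring
end
end

section
/- Let I ⊆ ℝ be an open interval, u = (u₁,u₂) a pair of functions I → ℂ, ζ₁ ≠ ζ₂ complex numbers, ψ₁ a ζ₁-wave and ψ₂ a ζ₂-wave for u with W(ψ₂,ψ₁) nowhere vanishing on I, and set v = B(u,(ζ₁,ζ₂),(ψ₁,ψ₂)). Then the function ψ₁/W(ψ₂,ψ₁) is a ζ₂-wave for v on I, and, symmetrically, ψ₂/W(ψ₁,ψ₂) is a ζ₁-wave for v on I. -/
noncomputable section

theorem wave_aux (I : Set ℝ)
    (u₁ u₂ : ℝ → ℂ) (ζ₁ ζ₂ : ℂ) (ψ₁ ψ₂ : ℝ → ℂ × ℂ)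
    (h₁ : IsWave I u₁ u₂ ζ₁ ψ₁) (h₂ : IsWave I u₁ u₂ ζ₂ ψ₂)
    (hW : ∀ x ∈ I, Wr ψ₂ ψ₁ x ≠ 0)
    (v₁ v₂ : ℝ → ℂ)
    (hv₁ : ∀ x, v₁ x = u₁ x + 2 * Complex.I * (ζ₂ - ζ₁) * (ψ₁ x).1 * (ψ₂ x).1 / Wr ψ₂ ψ₁ x)
    (hv₂ : ∀ x, v₂ x = u₂ x - 2 * Complex.I * (ζ₂ - ζ₁) * (ψ₁ x).2 * (ψ₂ x).2 / Wr ψ₂ ψ₁ x) :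
    IsWave I v₁ v₂ ζ₂ (fun x => (Wr ψ₂ ψ₁ x)⁻¹ • ψ₁ x) := by
  intro x hx
  obtain ⟨hp1, hq1⟩ := h₁ x hx
  obtain ⟨hp2, hq2⟩ := h₂ x hx
  have hw := hW x hx
  have hWd : HasDerivAt (Wr ψ₂ ψ₁) _ x := (hp2.mul hq1).sub (hq2.mul hp1)
  have hinv : HasDerivAt (fun y => (Wr ψ₂ ψ₁ y)⁻¹) _ x := hWd.fun_inv hw
  have hwe : Wr ψ₂ ψ₁ x = (ψ₂ x).1 * (ψ₁ x).2 - (ψ₂ x).2 * (ψ₁ x).1 := rfl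
  simp only [Prod.smul_fst, Prod.smul_snd, smul_eq_mul]
  rw [hv₁, hv₂]
  constructor
  · refine (hinv.mul hp1).congr_deriv ?_
    rw [hwe] at hw ⊢
    field_simp
    ring
  · refine (hinv.mul hq1).congr_deriv ?_
    rw [hwe] at hw ⊢
    field_simp
    ring

/-- with `v = B(u,(ζ₁,ζ₂),(ψ₁,ψ₂))` the Bäcklund transform, the function
`ψ₁/W(ψ₂,ψ₁)` is a `ζ₂`-wave for `v` on `I`, and symmetrically `ψ₂/W(ψ₁,ψ₂)`
is a `ζ₁`-wave for `v` on `I`. -/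
theorem statement3 (a b : ℝ) (I : Set ℝ) (hI : I = Set.Ioo a b)
    (u₁ u₂ : ℝ → ℂ) (ζ₁ ζ₂ : ℂ) (hζ : ζ₁ ≠ ζ₂)
    (ψ₁ ψ₂ : ℝ → ℂ × ℂ)
    (h₁ : IsWave I u₁ u₂ ζ₁ ψ₁) (h₂ : IsWave I u₁ u₂ ζ₂ ψ₂)
    (hW : ∀ x ∈ I, Wr ψ₂ ψ₁ x ≠ 0)
    (v₁ v₂ : ℝ → ℂ)
    (hv₁ : ∀ x, v₁ x = u₁ x + 2 * Complex.I * (ζ₂ - ζ₁) * (ψ₁ x).1 * (ψ₂ x).1 / Wr ψ₂ ψ₁ x)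
    (hv₂ : ∀ x, v₂ x = u₂ x - 2 * Complex.I * (ζ₂ - ζ₁) * (ψ₁ x).2 * (ψ₂ x).2 / Wr ψ₂ ψ₁ x) :
    IsWave I v₁ v₂ ζ₂ (fun x => (Wr ψ₂ ψ₁ x)⁻¹ • ψ₁ x) ∧
    IsWave I v₁ v₂ ζ₁ (fun x => (Wr ψ₁ ψ₂ x)⁻¹ • ψ₂ x) := by
  have hs : ∀ x, Wr ψ₁ ψ₂ x = -Wr ψ₂ ψ₁ x := fun x => by unfold Wr; ring
  refine ⟨wave_aux I u₁ u₂ ζ₁ ζ₂ ψ₁ ψ₂ h₁ h₂ hW v₁ v₂ hv₁ hv₂,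
    wave_aux I u₁ u₂ ζ₂ ζ₁ ψ₂ ψ₁ h₂ h₁ ?_ v₁ v₂ ?_ ?_⟩
  · intro x hx
    rw [hs]
    exact neg_ne_zero.mpr (hW x hx)
  · intro x
    rw [hv₁, hs, div_neg]
    ring
  · intro x
    rw [hv₂, hs, div_neg]
    ring
end
end

section
/- Let I ⊆ ℝ be an open interval, u = (u₁,u₂) a pair of differentiable functions I → ℂ, ζ₁ ≠ ζ₂ complex numbers, ψ₁ a ζ₁-wave and ψ₂ a ζ₂-wave for u with W(ψ₂,ψ₁) nowhere vanishing on I. Set v = B(u,(ζ₁,ζ₂),(ψ₁,ψ₂)), ψ̃₁ = ψ₂/W(ψ₁,ψ₂) and ψ̃₂ = ψ₁/W(ψ₂,ψ₁). Then for every twice differentiable φ : I → ℂ², the composition identity D(v,(ζ₁,ζ₂),(ψ̃₁,ψ̃₂))(D(u,(ζ₁,ζ₂),(ψ₁,ψ₂))φ) = (L(u) − ζ₁)((L(u) − ζ₂)φ) holds on I. -/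
noncomputable section

/-- with `v = B(u,(ζ₁,ζ₂),(ψ₁,ψ₂))` the Bäcklund transform,
`ψ̃₁ = ψ₂/W(ψ₁,ψ₂)` and `ψ̃₂ = ψ₁/W(ψ₂,ψ₁)`, the composition identity
`D(v,(ζ₁,ζ₂),(ψ̃₁,ψ̃₂))(D(u,(ζ₁,ζ₂),(ψ₁,ψ₂))φ) = (L(u) − ζ₁)((L(u) − ζ₂)φ)`
holds on `I` for every twice differentiable `φ`. -/
theorem statement4 (a b : ℝ) (I : Set ℝ) (hI : I = Set.Ioo a b)
    (u₁ u₂ : ℝ → ℂ)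
    (hu : ∀ x ∈ I, DifferentiableAt ℝ u₁ x ∧ DifferentiableAt ℝ u₂ x)
    (ζ₁ ζ₂ : ℂ) (hζ : ζ₁ ≠ ζ₂)
    (ψ₁ ψ₂ : ℝ → ℂ × ℂ)
    (h₁ : IsWave I u₁ u₂ ζ₁ ψ₁) (h₂ : IsWave I u₁ u₂ ζ₂ ψ₂)
    (hW : ∀ x ∈ I, Wr ψ₂ ψ₁ x ≠ 0)
    (v₁ v₂ : ℝ → ℂ)
    (hv₁ : ∀ x, v₁ x = u₁ x + 2 * Complex.I * (ζ₂ - ζ₁) * (ψ₁ x).1 * (ψ₂ x).1 / Wr ψ₂ ψ₁ x)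
    (hv₂ : ∀ x, v₂ x = u₂ x - 2 * Complex.I * (ζ₂ - ζ₁) * (ψ₁ x).2 * (ψ₂ x).2 / Wr ψ₂ ψ₁ x)
    (ψt₁ ψt₂ : ℝ → ℂ × ℂ)
    (hψt₁ : ∀ x, ψt₁ x = (Wr ψ₁ ψ₂ x)⁻¹ • ψ₂ x)
    (hψt₂ : ∀ x, ψt₂ x = (Wr ψ₂ ψ₁ x)⁻¹ • ψ₁ x)
    (φ : ℝ → ℂ × ℂ)
    (hφ : ∀ x ∈ I,
      DifferentiableAt ℝ (fun y => (φ y).1) x ∧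
      DifferentiableAt ℝ (fun y => (φ y).2) x ∧
      DifferentiableAt ℝ (deriv (fun y => (φ y).1)) x ∧
      DifferentiableAt ℝ (deriv (fun y => (φ y).2)) x) :
    ∀ x ∈ I,
      Dop v₁ v₂ ζ₁ ζ₂ ψt₁ ψt₂ (Dop u₁ u₂ ζ₁ ζ₂ ψ₁ ψ₂ φ) x
        = Lax u₁ u₂ (fun y => Lax u₁ u₂ φ y - ζ₂ • φ y) x
            - ζ₁ • (Lax u₁ u₂ φ x - ζ₂ • φ x) := by
  intro x hx
  obtain ⟨hp1, hp2⟩ := h₁ x hx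
  obtain ⟨hq1, hq2⟩ := h₂ x hx
  obtain ⟨hf1, hf2, hg1, hg2⟩ := hφ x hx
  obtain ⟨hu1, hu2⟩ := hu x hx
  have hWx := hW x hx
  obtain ⟨a₁, rfl⟩ : ∃ a₁ : ℂ, ζ₁ = -Complex.I * a₁ :=
    ⟨Complex.I * ζ₁, by rw [← mul_assoc, neg_mul, Complex.I_mul_I]; ring⟩
  obtain ⟨a₂, rfl⟩ : ∃ a₂ : ℂ, ζ₂ = -Complex.I * a₂ :=
    ⟨Complex.I * ζ₂, by rw [← mul_assoc, neg_mul, Complex.I_mul_I]; ring⟩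
  have hI2 : ∀ z : ℂ, Complex.I * (-Complex.I * z) = z := fun z => by
    rw [← mul_assoc, mul_neg, Complex.I_mul_I]; ring
  have hI3 : ∀ z : ℂ, -Complex.I * (-Complex.I * z) = -z := fun z => by
    rw [neg_mul, hI2]
  have hI4 : ∀ z w : ℂ, 2 * Complex.I * (-Complex.I * z - -Complex.I * w) = 2 * (z - w) :=
    fun z w => by rw [mul_assoc, mul_sub, hI2, hI2]
  rw [hI3] at hp1 hq1
  rw [hI2] at hp2 hq2
  have df1 := hf1.hasDerivAt
  have df2 := hf2.hasDerivAt
  have dg1 := hg1.hasDerivAt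
  have dg2 := hg2.hasDerivAt
  have du1 := hu1.hasDerivAt
  have du2 := hu2.hasDerivAt
  -- first-order pieces
  have dM1 := ((dg1.sub (du1.mul df2)).const_mul Complex.I).sub
    (df1.const_mul (-Complex.I * a₂))
  have dM2 := (((du2.mul df1).add dg2).const_mul (-Complex.I)).sub
    (df2.const_mul (-Complex.I * a₂))
  have dc := (((hq1.mul df2).sub (hq2.mul df1)).const_mul
    (-Complex.I * a₂ - -Complex.I * a₁)).div ((hq1.mul hp2).sub (hq2.mul hp1)) hWx
  have e1 := (dM1.add (dc.mul hp1)).deriv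
  have e2 := (dM2.add (dc.mul hp2)).deriv
  have e3 := dM1.deriv
  have e4 := dM2.deriv
  have E1 : deriv (fun y => (Dop u₁ u₂ (-Complex.I * a₁) (-Complex.I * a₂) ψ₁ ψ₂ φ y).1) x = _ := e1
  have E2 : deriv (fun y => (Dop u₁ u₂ (-Complex.I * a₁) (-Complex.I * a₂) ψ₁ ψ₂ φ y).2) x = _ := e2
  have E3 : deriv (fun y => (Lax u₁ u₂ φ y - (-Complex.I * a₂) • φ y).1) x = _ := e3
  have E4 : deriv (fun y => (Lax u₁ u₂ φ y - (-Complex.I * a₂) • φ y).2) x = _ := e4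
  have hWs : Wr ψ₁ ψ₂ x = - Wr ψ₂ ψ₁ x := by simp only [Wr]; ring
  have hWt : Wr ψt₂ ψt₁ x = (Wr ψ₂ ψ₁ x)⁻¹ := by
    have : Wr ψt₂ ψt₁ x = (Wr ψ₂ ψ₁ x)⁻¹ * (Wr ψ₁ ψ₂ x)⁻¹ * Wr ψ₁ ψ₂ x := by
      simp only [Wr, hψt₁, hψt₂, Prod.smul_fst, Prod.smul_snd, smul_eq_mul]; ring
    rw [this, mul_assoc, inv_mul_cancel₀ (by rw [hWs]; exact neg_ne_zero.mpr hWx), mul_one]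
  rw [Dop, hWt, hψt₁, hWs]
  simp only [Lax] at E3 E4 ⊢
  rw [E1, E2, E3, E4, hv₁, hv₂, hI4]
  simp only [Dop, Lax, Wr, hψt₂, Pi.mul_apply, Pi.div_apply, Pi.sub_apply, Pi.add_apply, Prod.fst_add,
    Prod.snd_add, Prod.fst_sub, Prod.snd_sub, Prod.smul_fst, Prod.smul_snd, smul_eq_mul] at hWx ⊢
  clear e1 e2 e3 e4 E1 E2 E3 E4 dc dM1 dM2 hp1 hp2 hq1 hq2
  ext
  · simp only [Prod.fst_add, Prod.fst_sub, Prod.smul_fst, smul_eq_mul]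
    field_simp
    ring
  · simp only [Prod.snd_add, Prod.snd_sub, Prod.smul_snd, smul_eq_mul]
    generalize hWd : (ψ₂ x).1 * (ψ₁ x).2 - (ψ₂ x).2 * (ψ₁ x).1 = W at hWx ⊢
    field_simp
    rw [← hWd]
    ring
end
end

section
/- Let I ⊆ ℝ be an open interval, u : I → ℂ, ζ ∈ ℂ, and let φ = (φ₁,φ₂) : I → ℂ² be a nowhere-vanishing differentiable function satisfying φ₁' = −iζφ₁ + uφ₂ and φ₂' = iζφ₂ − conj(u)φ₁. Define the Bäcklund transform v = u + 4(Im ζ)·φ₁·conj(φ₂)/(|φ₁|² + |φ₂|²). Then the function χ = φ/(|φ₁|² + |φ₂|²) satisfies χ₁' = −i·conj(ζ)·χ₁ + vχ₂ and χ₂' = i·conj(ζ)·χ₂ − conj(v)χ₁ on I; that is, χ is a conj(ζ)-eigenfunction of the Lax operator associated to v. -/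
noncomputable section

/-- NLS Bäcklund transform. If `φ` is a nowhere-vanishing `ζ`-wave for the
potential `u` on the open interval `I` and `v = u + 4(Im ζ)·φ₁·conj(φ₂)/(|φ₁|² + |φ₂|²)`,
then `χ = φ/(|φ₁|² + |φ₂|²)` solves the Zakharov–Shabat system for `v` with spectral
parameter `conj ζ`; i.e. `χ` is a `conj ζ`-eigenfunction of the Lax operator of `v`. -/
theorem statement5 (a b : ℝ) (I : Set ℝ) (hI : I = Set.Ioo a b)
    (u : ℝ → ℂ) (ζ : ℂ) (φ : ℝ → ℂ × ℂ)
    (hφ0 : ∀ x ∈ I, φ x ≠ 0)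
    (hφ : ∀ x ∈ I,
      HasDerivAt (fun y => (φ y).1) (-Complex.I * ζ * (φ x).1 + u x * (φ x).2) x ∧
      HasDerivAt (fun y => (φ y).2)
        (Complex.I * ζ * (φ x).2 - (starRingEnd ℂ) (u x) * (φ x).1) x)
    (v : ℝ → ℂ)
    (hv : ∀ x, v x = u x + 4 * (ζ.im : ℂ) * (φ x).1 * (starRingEnd ℂ) (φ x).2 /
        ((Complex.normSq (φ x).1 + Complex.normSq (φ x).2 : ℝ) : ℂ))
    (χ : ℝ → ℂ × ℂ)
    (hχ : ∀ x, χ x = (((Complex.normSq (φ x).1 + Complex.normSq (φ x).2 : ℝ) : ℂ))⁻¹ • φ x) :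
    ∀ x ∈ I,
      HasDerivAt (fun y => (χ y).1)
        (-Complex.I * (starRingEnd ℂ) ζ * (χ x).1 + v x * (χ x).2) x ∧
      HasDerivAt (fun y => (χ y).2)
        (Complex.I * (starRingEnd ℂ) ζ * (χ x).2 - (starRingEnd ℂ) (v x) * (χ x).1) x := by
  intro x hx
  obtain ⟨h1, h2⟩ := hφ x hx
  have h0 := hφ0 x hx
  have hN : ∀ y, ((Complex.normSq (φ y).1 + Complex.normSq (φ y).2 : ℝ) : ℂ) =
      (φ y).1 * (starRingEnd ℂ) (φ y).1 + (φ y).2 * (starRingEnd ℂ) (φ y).2 := by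
    intro y
    rw [Complex.mul_conj, Complex.mul_conj, Complex.ofReal_add]
  have hne : ((Complex.normSq (φ x).1 + Complex.normSq (φ x).2 : ℝ) : ℂ) ≠ 0 := by
    intro h
    rw [Complex.ofReal_eq_zero] at h
    have a1 := Complex.normSq_nonneg (φ x).1
    have a2 := Complex.normSq_nonneg (φ x).2
    apply h0
    ext1
    · exact Complex.normSq_eq_zero.1 (by linarith)
    · exact Complex.normSq_eq_zero.1 (by linarith)
  have c1 : HasDerivAt (fun y => (starRingEnd ℂ) (φ y).1) _ x := h1.star
  have c2 : HasDerivAt (fun y => (starRingEnd ℂ) (φ y).2) _ x := h2.star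
  have hD := (h1.mul c1).add (h2.mul c2)
  have hz : ζ = (starRingEnd ℂ) ζ + 2 * (ζ.im : ℂ) * Complex.I := by
    apply Complex.ext <;> simp <;> ring
  have hI2 := Complex.I_mul_I
  have hvc : (starRingEnd ℂ) (v x) = (starRingEnd ℂ) (u x) +
      4 * (ζ.im : ℂ) * (starRingEnd ℂ) (φ x).1 * (φ x).2 /
        ((Complex.normSq (φ x).1 + Complex.normSq (φ x).2 : ℝ) : ℂ) := by
    rw [hv]
    simp only [map_add, map_mul, map_div₀, Complex.conj_ofReal, Complex.conj_conj, map_ofNat]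
  have hDn : HasDerivAt (fun y => (φ y).1 * (starRingEnd ℂ) (φ y).1 +
      (φ y).2 * (starRingEnd ℂ) (φ y).2)
      (2 * (ζ.im : ℂ) * ((φ x).1 * (starRingEnd ℂ) (φ x).1 -
        (φ x).2 * (starRingEnd ℂ) (φ x).2)) x := by
    refine hD.congr_deriv ?_
    simp only [← starRingEnd_apply, map_add, map_sub, map_mul, map_neg, Complex.conj_I,
      Complex.conj_conj]
    linear_combination (-Complex.I * ((φ x).1 * (starRingEnd ℂ) (φ x).1 -
        (φ x).2 * (starRingEnd ℂ) (φ x).2)) * hz - 2 * (ζ.im : ℂ) *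
        ((φ x).1 * (starRingEnd ℂ) (φ x).1 - (φ x).2 * (starRingEnd ℂ) (φ x).2) * hI2
  rw [hvc, hv x]
  simp only [hχ, Prod.smul_fst, Prod.smul_snd, smul_eq_mul, hN] at hne ⊢
  have hinv := hDn.inv hne
  constructor
  · refine (hinv.mul h1).congr_deriv ?_
    simp only [Pi.inv_apply]
    generalize (starRingEnd ℂ) (φ x).1 = pc at *
    generalize (starRingEnd ℂ) (φ x).2 = qc at *
    field_simp
    linear_combination (-Complex.I * (φ x).1 * ((φ x).1 * pc + (φ x).2 * qc)) * hz
      - 2 * (ζ.im : ℂ) * (φ x).1 * ((φ x).1 * pc + (φ x).2 * qc) * hI2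
  · refine (hinv.mul h2).congr_deriv ?_
    simp only [Pi.inv_apply]
    generalize (starRingEnd ℂ) (φ x).1 = pc at *
    generalize (starRingEnd ℂ) (φ x).2 = qc at *
    field_simp
    linear_combination (Complex.I * (φ x).2 * ((φ x).1 * pc + (φ x).2 * qc)) * hz
      + 2 * (ζ.im : ℂ) * (φ x).2 * ((φ x).1 * pc + (φ x).2 * qc) * hI2
end
end

section
/- Let N ≥ 1, let z₁,…,z_N be pairwise distinct complex numbers with Im z_j > 0 for all j, and let ψ₁,…,ψ_N ∈ ℂ² be nonzero vectors. Then the N×N matrix M with entries M_{jk} = i·(ψ_k*ψ_j)/(z_j − conj(z_k)) is Hermitian and positive definite. -/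
noncomputable section

/-- Hermitian inner product on `ℂ²` (viewed as `Fin 2 → ℂ`): `φ*ψ = Σ_a conj(φ^a)·ψ^a`. -/
def herm (φ ψ : Fin 2 → ℂ) : ℂ := ∑ a, (starRingEnd ℂ) (φ a) * ψ a

/-- The matrix `M` with entries `M_{jk} = i·(ψ_k*ψ_j)/(z_j − conj(z_k))`. -/
def gramM (N : ℕ) (z : Fin N → ℂ) (ψ : Fin N → Fin 2 → ℂ) : Matrix (Fin N) (Fin N) ℂ :=
  Matrix.of fun j k => Complex.I * herm (ψ k) (ψ j) / (z j - (starRingEnd ℂ) (z k))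

open scoped ComplexOrder

open MeasureTheory in
lemma exp_indep_aux (N : ℕ) (z : Fin N → ℂ) (hdist : Function.Injective z) (c : Fin N → ℂ)
    (h : ∀ t : ℝ, 0 < t → ∑ j, c j * Complex.exp (Complex.I * z j * t) = 0) : ∀ j, c j = 0 := by
  let χ : Fin N → (Multiplicative NNReal →* ℂ) := fun j =>
    { toFun := fun s => Complex.exp (Complex.I * z j * ((Multiplicative.toAdd s : NNReal) : ℝ))
      map_one' := by simp
      map_mul' := by
        intro a b
        rw [← Complex.exp_add]
        congr 1
        simp only [toAdd_mul]
        push_cast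
        ring }
  have hχ : Function.Injective χ := by
    intro j k hjk
    by_contra hne
    have hu : z j - z k ≠ 0 := sub_ne_zero.mpr (fun e => hne (hdist e))
    have hn : 0 < ‖z j - z k‖ := norm_pos_iff.mpr hu
    set t : NNReal := ⟨1 / ‖z j - z k‖, by positivity⟩ with ht
    have h1 : Complex.exp (Complex.I * z j * ((t : ℝ) : ℂ))
        = Complex.exp (Complex.I * z k * ((t : ℝ) : ℂ)) :=
      DFunLike.congr_fun hjk (Multiplicative.ofAdd t)
    obtain ⟨n, hn'⟩ := Complex.exp_eq_exp_iff_exists_int.mp h1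
    have h2 : Complex.I * (z j - z k) * ((t : ℝ) : ℂ) = n * (2 * Real.pi * Complex.I) := by
      linear_combination hn'
    have h3 := congrArg norm h2
    have htv : ((t : ℝ)) = 1 / ‖z j - z k‖ := rfl
    have h4 : (1 : ℝ) = |(n : ℝ)| * (2 * Real.pi) := by
      have e1 : ‖Complex.I * (z j - z k) * ((t : ℝ) : ℂ)‖ = 1 := by
        rw [norm_mul, norm_mul, Complex.norm_I, Complex.norm_real, htv, Real.norm_eq_abs,
          abs_of_pos (by positivity)]
        field_simp
      have e2 : ‖(n : ℂ) * (2 * Real.pi * Complex.I)‖ = |(n : ℝ)| * (2 * Real.pi) := by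
        simp [abs_of_pos Real.pi_pos]
      rw [← e1, h3, e2]
    have h5 := Real.pi_gt_three
    rcases eq_or_ne n 0 with h0 | h0
    · simp [h0] at h4
    · have : (1 : ℝ) ≤ |(n : ℝ)| := by exact_mod_cast Int.one_le_abs h0
      nlinarith
  have hli := (linearIndependent_monoidHom (Multiplicative NNReal) ℂ).comp χ hχ
  rw [Fintype.linearIndependent_iff] at hli
  have := hli (fun j => c j * Complex.exp (Complex.I * z j)) (by
    funext s
    have := h ((Multiplicative.toAdd s : NNReal) + 1) (by positivity)
    simp only [Finset.sum_apply, Pi.smul_apply, Function.comp, smul_eq_mul, Pi.zero_apply]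
    rw [← this]
    refine Finset.sum_congr rfl fun j _ => ?_
    change c j * Complex.exp (Complex.I * z j) *
      Complex.exp (Complex.I * z j * ((Multiplicative.toAdd s : NNReal) : ℝ)) = _
    rw [mul_assoc, ← Complex.exp_add]
    congr 2
    push_cast
    ring)
  intro j
  simpa [Complex.exp_ne_zero] using this j

lemma exp_conj_aux (z w : ℂ) (t : ℝ) :
    Complex.exp (Complex.I * z * t) * (starRingEnd ℂ) (Complex.exp (Complex.I * w * t))
      = Complex.exp (Complex.I * (z - (starRingEnd ℂ) w) * t) := by
  rw [← Complex.exp_conj, ← Complex.exp_add]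
  congr 1
  simp only [map_mul, Complex.conj_I, Complex.conj_ofReal]
  ring

open MeasureTheory in
lemma integral_aux (N : ℕ) (z : Fin N → ℂ) (hz : ∀ j, 0 < (z j).im) (c : Fin N → ℂ) :
    IntegrableOn (fun t : ℝ =>
      Complex.normSq (∑ j, c j * Complex.exp (Complex.I * z j * t))) (Set.Ioi 0) ∧
    ((∫ t in Set.Ioi (0:ℝ),
      Complex.normSq (∑ j, c j * Complex.exp (Complex.I * z j * t)) : ℝ) : ℂ)
    = ∑ j, ∑ k, c j * (starRingEnd ℂ) (c k) *
        (Complex.I / (z j - (starRingEnd ℂ) (z k))) := by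
  have hexp : ∀ t : ℝ, ((Complex.normSq (∑ j, c j * Complex.exp (Complex.I * z j * t)) : ℝ) : ℂ)
      = ∑ j, ∑ k, c j * (starRingEnd ℂ) (c k) *
        Complex.exp (Complex.I * (z j - (starRingEnd ℂ) (z k)) * t) := by
    intro t
    rw [← Complex.mul_conj, map_sum, Finset.sum_mul_sum]
    refine Finset.sum_congr rfl fun j _ => Finset.sum_congr rfl fun k _ => ?_
    rw [← exp_conj_aux, map_mul]
    ring
  have hre : ∀ j k, (Complex.I * (z j - (starRingEnd ℂ) (z k))).re < 0 := by
    intro j k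
    have := hz j
    have := hz k
    simp
    linarith
  have hint : ∀ j k, IntegrableOn (fun t : ℝ => c j * (starRingEnd ℂ) (c k) *
        Complex.exp (Complex.I * (z j - (starRingEnd ℂ) (z k)) * t)) (Set.Ioi 0) := fun j k =>
    (integrableOn_exp_mul_complex_Ioi (hre j k) 0).const_mul _
  have hI : IntegrableOn (fun t : ℝ =>
      ((Complex.normSq (∑ j, c j * Complex.exp (Complex.I * z j * t)) : ℝ) : ℂ)) (Set.Ioi 0) := by
    simp only [hexp]
    exact integrable_finsetSum _ fun j _ => integrable_finsetSum _ fun k _ => hint j k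
  refine ⟨by simpa [IntegrableOn] using hI.re, ?_⟩
  rw [← integral_complex_ofReal]
  simp only [hexp]
  rw [integral_finsetSum _ fun j _ => integrable_finsetSum _ fun k _ => hint j k]
  refine Finset.sum_congr rfl fun j _ => ?_
  rw [integral_finsetSum _ fun k _ => hint j k]
  refine Finset.sum_congr rfl fun k _ => ?_
  rw [integral_const_mul, integral_exp_mul_complex_Ioi (hre j k)]
  have hne : z j - (starRingEnd ℂ) (z k) ≠ 0 := by
    intro h0
    have := hre j k
    simp [h0] at this
  congr 1
  simp only [Complex.ofReal_zero, mul_zero, Complex.exp_zero]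
  field_simp
  simp

open MeasureTheory in
lemma integral_zero_aux (N : ℕ) (z : Fin N → ℂ) (hz : ∀ j, 0 < (z j).im)
    (hdist : Function.Injective z) (c : Fin N → ℂ)
    (h0 : ∫ t in Set.Ioi (0:ℝ),
      Complex.normSq (∑ j, c j * Complex.exp (Complex.I * z j * t)) = 0) : ∀ j, c j = 0 := by
  apply exp_indep_aux N z hdist
  have h1 := (integral_eq_zero_iff_of_nonneg (fun t => Complex.normSq_nonneg _)
    (integral_aux N z hz c).1).mp h0
  have h2 := Measure.eqOn_open_of_ae_eq (μ := volume) h1 isOpen_Ioi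
    (Continuous.continuousOn (by
      apply Complex.continuous_normSq.comp
      fun_prop)) continuousOn_const
  intro t ht
  exact Complex.normSq_eq_zero.mp (h2 ht)

/-- for pairwise distinct `z₁,…,z_N` in the upper half-plane and nonzero
vectors `ψ₁,…,ψ_N ∈ ℂ²`, the matrix `M_{jk} = i·(ψ_k*ψ_j)/(z_j − conj(z_k))`
is Hermitian and positive definite. -/
theorem statement7 (N : ℕ) (hN : 1 ≤ N) (z : Fin N → ℂ)
    (hz : ∀ j, 0 < (z j).im) (hdist : Function.Injective z)
    (ψ : Fin N → Fin 2 → ℂ) (hψ : ∀ j, ψ j ≠ 0) :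
    (gramM N z ψ).IsHermitian ∧ (gramM N z ψ).PosDef := by
  have hH : (gramM N z ψ).IsHermitian := by
    ext j k
    simp only [Matrix.conjTranspose_apply, gramM, Matrix.of_apply, herm, Fin.sum_univ_two]
    simp only [Complex.star_def, map_div₀, map_mul, map_add, map_sub, Complex.conj_I,
      Complex.conj_conj]
    rw [← neg_sub (z j), div_neg, ← neg_div]
    congr 1
    ring
  refine ⟨hH, Matrix.PosDef.of_dotProduct_mulVec_pos hH fun x hx => ?_⟩
  have key : star x ⬝ᵥ (gramM N z ψ).mulVec x = ((∑ a : Fin 2, ∫ t in Set.Ioi (0:ℝ),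
      Complex.normSq (∑ j, ((starRingEnd ℂ) (x j) * ψ j a) *
        Complex.exp (Complex.I * z j * t)) : ℝ) : ℂ) := by
    rw [Complex.ofReal_sum]
    simp only [fun a => (integral_aux N z hz (fun j => (starRingEnd ℂ) (x j) * ψ j a)).2]
    rw [Finset.sum_comm]
    simp only [dotProduct, Matrix.mulVec]
    refine Finset.sum_congr rfl fun j _ => ?_
    rw [Finset.sum_comm, Finset.mul_sum]
    refine Finset.sum_congr rfl fun k _ => ?_
    simp only [gramM, Matrix.of_apply, herm, Fin.sum_univ_two, Pi.star_apply, Complex.star_def,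
      map_mul, Complex.conj_conj]
    ring
  have hnn : ∀ a : Fin 2, 0 ≤ ∫ t in Set.Ioi (0:ℝ),
      Complex.normSq (∑ j, ((starRingEnd ℂ) (x j) * ψ j a) *
        Complex.exp (Complex.I * z j * t)) :=
    fun a => MeasureTheory.integral_nonneg fun t => Complex.normSq_nonneg _
  rw [key, Complex.zero_lt_real]
  refine lt_of_le_of_ne (Finset.sum_nonneg fun a _ => hnn a) fun h0 => hx ?_
  have h1 := (Finset.sum_eq_zero_iff_of_nonneg fun a _ => hnn a).mp h0.symm
  funext j
  by_contra hxj
  apply hψ j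
  funext a
  have := integral_zero_aux N z hz hdist _ (h1 a (Finset.mem_univ a)) j
  rcases mul_eq_zero.mp this with h | h
  · exact absurd ((map_eq_zero _).mp h) hxj
  · exact h
end
end

section
/- Let N ≥ 1, let z₁,…,z_N be pairwise distinct complex numbers with Im z_j > 0, and let ψ₁,…,ψ_N ∈ ℂ² be nonzero vectors, so that the matrix M with entries M_{jk} = i·(ψ_k*ψ j)/(z_j − conj(z_k)) is invertible; write m = M⁻¹. Then the 2×2 matrix A = Σ_{j,k=1}^N m_{kj}·ψ_j·ψ_k* (where ψ_j·ψ_k* is the outer product with entries ψ_j^a·conj(ψ_k^b)) satisfies Tr A = 2·Σ_{j=1}^N Im z_j. -/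
noncomputable section

lemma gramM_mul (N : ℕ) (z : Fin N → ℂ) (hz : ∀ j, 0 < (z j).im)
    (ψ : Fin N → Fin 2 → ℂ) (j k : Fin N) :
    (z j - (starRingEnd ℂ) (z k)) * gramM N z ψ j k = Complex.I * herm (ψ k) (ψ j) := by
  have h : z j - (starRingEnd ℂ) (z k) ≠ 0 := by
    intro h
    have h2 := congrArg Complex.im h
    simp at h2
    linarith [hz j, hz k]
  simp only [gramM, Matrix.of_apply]
  field_simp

lemma gramM_conj (N : ℕ) (z : Fin N → ℂ) (ψ : Fin N → Fin 2 → ℂ) (j k : Fin N) :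
    (starRingEnd ℂ) (gramM N z ψ k j) = gramM N z ψ j k := by
  simp only [gramM, Matrix.of_apply, herm, map_div₀, map_mul, map_sub, map_sum,
    Complex.conj_conj, Complex.conj_I]
  rw [← neg_sub (z j), div_neg, neg_mul, neg_div, neg_neg]
  congr 2
  exact Finset.sum_congr rfl fun a _ => mul_comm _ _

lemma ker_sum (N : ℕ) (z : Fin N → ℂ) (hz : ∀ j, 0 < (z j).im)
    (ψ : Fin N → Fin 2 → ℂ) (c : Fin N → ℂ)
    (hc : ∀ j, ∑ k, gramM N z ψ j k * c k = 0) (a : Fin 2) :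
    ∑ k, (starRingEnd ℂ) (ψ k a) * c k = 0 := by
  have hc' : ∀ k, ∑ j, (starRingEnd ℂ) (c j) * gramM N z ψ j k = 0 := by
    intro k
    have := congrArg (starRingEnd ℂ) (hc k)
    rw [map_sum, map_zero] at this
    rw [← this]
    refine Finset.sum_congr rfl fun j _ => ?_
    rw [map_mul, gramM_conj, mul_comm]
  have e1 : ∑ j, ∑ k, (starRingEnd ℂ) (c j) *
      ((z j - (starRingEnd ℂ) (z k)) * gramM N z ψ j k) * c k = 0 := by
    have : ∀ j k, (starRingEnd ℂ) (c j) *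
      ((z j - (starRingEnd ℂ) (z k)) * gramM N z ψ j k) * c k =
      ((starRingEnd ℂ) (c j) * z j) * (gramM N z ψ j k * c k) -
      ((starRingEnd ℂ) (c j) * gramM N z ψ j k) * ((starRingEnd ℂ) (z k) * c k) := by
      intros; ring
    simp only [this, Finset.sum_sub_distrib]
    rw [Finset.sum_comm (f := fun j k => ((starRingEnd ℂ) (c j) * gramM N z ψ j k) *
      ((starRingEnd ℂ) (z k) * c k))]
    simp only [← Finset.mul_sum, ← Finset.sum_mul, hc, hc']
    simp
  have e2 : ∑ j, ∑ k, (starRingEnd ℂ) (c j) *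
      ((z j - (starRingEnd ℂ) (z k)) * gramM N z ψ j k) * c k =
      Complex.I * ∑ a, (starRingEnd ℂ) (∑ k, (starRingEnd ℂ) (ψ k a) * c k) *
        (∑ k, (starRingEnd ℂ) (ψ k a) * c k) := by
    simp only [gramM_mul N z hz, herm, Fin.sum_univ_two, map_sum, map_mul, Complex.conj_conj,
      Finset.sum_mul_sum]
    simp only [← Finset.sum_add_distrib, Finset.mul_sum]
    refine Finset.sum_congr rfl fun j _ => Finset.sum_congr rfl fun k _ => ?_
    ring
  rw [e1] at e2
  have e3 := (mul_eq_zero.mp e2.symm).resolve_left Complex.I_ne_zero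
  simp only [← Complex.normSq_eq_conj_mul_self] at e3
  rw [← Complex.ofReal_sum, Complex.ofReal_eq_zero,
    Finset.sum_eq_zero_iff_of_nonneg (fun _ _ => Complex.normSq_nonneg _)] at e3
  exact Complex.normSq_eq_zero.mp (e3 a (Finset.mem_univ _))

lemma ker_shift (N : ℕ) (z : Fin N → ℂ) (hz : ∀ j, 0 < (z j).im)
    (ψ : Fin N → Fin 2 → ℂ) (c : Fin N → ℂ)
    (hc : ∀ j, ∑ k, gramM N z ψ j k * c k = 0) (j : Fin N) :
    ∑ k, gramM N z ψ j k * ((starRingEnd ℂ) (z k) * c k) = 0 := by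
  have h0 := ker_sum N z hz ψ c hc
  have e : ∀ k, gramM N z ψ j k * ((starRingEnd ℂ) (z k) * c k) =
      z j * (gramM N z ψ j k * c k) -
      (Complex.I * ψ j 0 * ((starRingEnd ℂ) (ψ k 0) * c k) +
       Complex.I * ψ j 1 * ((starRingEnd ℂ) (ψ k 1) * c k)) := by
    intro k
    have := gramM_mul N z hz ψ j k
    simp only [herm, Fin.sum_univ_two] at this
    linear_combination (-c k) * this
  simp only [e, Finset.sum_sub_distrib, Finset.sum_add_distrib, ← Finset.mul_sum, hc, h0]
  simp

lemma ker_pow (N : ℕ) (z : Fin N → ℂ) (hz : ∀ j, 0 < (z j).im)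
    (ψ : Fin N → Fin 2 → ℂ) (c : Fin N → ℂ)
    (hc : ∀ j, ∑ k, gramM N z ψ j k * c k = 0) (n : ℕ) :
    ∀ j, ∑ k, gramM N z ψ j k * ((starRingEnd ℂ) (z k) ^ n * c k) = 0 := by
  induction n with
  | zero => simpa using hc
  | succ n ih =>
    intro j
    rw [← ker_shift N z hz ψ _ ih j]
    refine Finset.sum_congr rfl fun k _ => ?_
    ring

lemma gramM_det (N : ℕ) (z : Fin N → ℂ)
    (hz : ∀ j, 0 < (z j).im) (hdist : Function.Injective z)
    (ψ : Fin N → Fin 2 → ℂ) (hψ : ∀ j, ψ j ≠ 0) : (gramM N z ψ).det ≠ 0 := by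
  intro hdet
  obtain ⟨c, hc0, hc⟩ := Matrix.exists_mulVec_eq_zero_iff.mpr hdet
  apply hc0
  have hc1 : ∀ j, ∑ k, gramM N z ψ j k * c k = 0 := fun j => congrFun hc j
  have hv : ∀ a, (fun k => (starRingEnd ℂ) (ψ k a) * c k) = 0 := by
    intro a
    refine Matrix.eq_zero_of_forall_pow_sum_mul_pow_eq_zero
      (f := fun k => (starRingEnd ℂ) (z k))
      (fun x y h => hdist ((starRingEnd ℂ).injective h)) ?_
    intro i
    rw [← ker_sum N z hz ψ _ (ker_pow N z hz ψ c hc1 i) a]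
    refine Finset.sum_congr rfl fun k _ => ?_
    ring
  funext k
  by_contra hk
  apply hψ k
  funext a
  have := congrFun (hv a) k
  rw [Pi.zero_apply] at this
  simpa using (mul_eq_zero.mp this).resolve_right hk

/-- with `m = M⁻¹` the inverse of the Gram matrix
`M_{jk} = i·(ψ_k*ψ_j)/(z_j − conj(z_k))`, the `2×2` matrix
`A = Σ_{j,k} m_{kj}·ψ_j·ψ_k*` (outer products) satisfies `Tr A = 2·Σ_j Im z_j`. -/
theorem statement8 (N : ℕ) (hN : 1 ≤ N) (z : Fin N → ℂ)
    (hz : ∀ j, 0 < (z j).im) (hdist : Function.Injective z)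
    (ψ : Fin N → Fin 2 → ℂ) (hψ : ∀ j, ψ j ≠ 0)
    (A : Matrix (Fin 2) (Fin 2) ℂ)
    (hA : A = Matrix.of fun a b =>
      ∑ j, ∑ k, (gramM N z ψ)⁻¹ k j * ψ j a * (starRingEnd ℂ) (ψ k b)) :
    A.trace = ((2 * ∑ j, (z j).im : ℝ) : ℂ) := by
  have hdet := gramM_det N z hz hdist ψ hψ
  have hu : IsUnit (gramM N z ψ).det := isUnit_iff_ne_zero.mpr hdet
  have h1 : ∀ j, ∑ k, gramM N z ψ j k * (gramM N z ψ)⁻¹ k j = 1 := by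
    intro j
    have := congrFun (congrFun (Matrix.mul_nonsing_inv _ hu) j) j
    simpa [Matrix.mul_apply] using this
  have h2 : ∀ k, ∑ j, (gramM N z ψ)⁻¹ k j * gramM N z ψ j k = 1 := by
    intro k
    have := congrFun (congrFun (Matrix.nonsing_inv_mul _ hu) k) k
    simpa [Matrix.mul_apply] using this
  have h3 : A.trace = ∑ j, ∑ k, (-Complex.I * z j * (gramM N z ψ j k * (gramM N z ψ)⁻¹ k j) -
      -Complex.I * (starRingEnd ℂ) (z k) * ((gramM N z ψ)⁻¹ k j * gramM N z ψ j k)) := by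
    rw [hA, Matrix.trace_fin_two]
    simp only [Matrix.of_apply, ← Finset.sum_add_distrib]
    refine Finset.sum_congr rfl fun j _ => Finset.sum_congr rfl fun k _ => ?_
    have := gramM_mul N z hz ψ j k
    simp only [herm, Fin.sum_univ_two] at this
    linear_combination (Complex.I * (gramM N z ψ)⁻¹ k j) * this +
      (gramM N z ψ)⁻¹ k j * (ψ j 0 * (starRingEnd ℂ) (ψ k 0) +
        ψ j 1 * (starRingEnd ℂ) (ψ k 1)) * Complex.I_mul_I
  rw [h3]
  simp only [Finset.sum_sub_distrib]
  rw [Finset.sum_comm (f := fun j k => -Complex.I * (starRingEnd ℂ) (z k) *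
    ((gramM N z ψ)⁻¹ k j * gramM N z ψ j k))]
  simp only [← Finset.mul_sum, h1, h2]
  rw [← Finset.sum_sub_distrib]
  push_cast
  rw [Finset.mul_sum]
  refine Finset.sum_congr rfl fun j _ => ?_
  have := Complex.sub_conj (z j)
  push_cast at this
  linear_combination (-Complex.I) * this - 2 * ((z j).im : ℂ) * Complex.I_mul_I
end
end

section
/- Let N ≥ 1, let z₁,…,z_N be pairwise distinct complex numbers with Im z_j > 0, and let ψ₁,…,ψ_N ∈ ℂ² be nonzero vectors. Let M be the matrix with entries M_{jk} = i·(ψ_k*ψ_j)/(z_j − conj(z_k)), let m = M⁻¹, and define φ_j = Σ_{k=1}^N m_{jk}·ψ_k ∈ ℂ². Then the inverse matrix satisfies the converse relation m_{jk} = i·(φ_k*φ_j)/(z_k − conj(z_j)) for all 1 ≤ j,k ≤ N. -/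
noncomputable section

open Matrix in
theorem statement9_aux (N : ℕ) (z : Fin N → ℂ)
    (hz : ∀ j, 0 < (z j).im) (ψ : Fin N → Fin 2 → ℂ) :
    Matrix.diagonal z * gramM N z ψ
      - gramM N z ψ * Matrix.diagonal (fun k => (starRingEnd ℂ) (z k))
      = Complex.I • (Matrix.of ψ * (Matrix.of ψ)ᴴ) := by
  ext j k
  have hne : z j - (starRingEnd ℂ) (z k) ≠ 0 := by
    intro h
    have := congrArg Complex.im h
    simp at this
    linarith [hz j, hz k]
  rw [Matrix.sub_apply, Matrix.diagonal_mul, Matrix.mul_diagonal]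
  simp only [Matrix.smul_apply,
    Matrix.mul_apply, Matrix.conjTranspose_apply, Matrix.of_apply, gramM, herm, smul_eq_mul,
    Fin.sum_univ_two, RCLike.star_def]
  field_simp

open Matrix in
theorem statement9_herm (N : ℕ) (z : Fin N → ℂ) (ψ : Fin N → Fin 2 → ℂ) :
    (gramM N z ψ)ᴴ = gramM N z ψ := by
  ext j k
  simp only [Matrix.conjTranspose_apply, gramM, Matrix.of_apply, herm, Fin.sum_univ_two,
    RCLike.star_def, map_div₀, map_mul, map_add, map_sub, Complex.conj_conj, Complex.conj_I]
  rw [← neg_sub (z j), div_neg, neg_mul, neg_div, neg_neg]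
  congr 1
  ring

/-- with `m = M⁻¹` the inverse of the Gram matrix
`M_{jk} = i·(ψ_k*ψ_j)/(z_j − conj(z_k))` and `φ_j = Σ_k m_{jk}·ψ_k`, the inverse
satisfies the converse relation `m_{jk} = i·(φ_k*φ_j)/(z_k − conj(z_j))`. -/
theorem statement9 (N : ℕ) (hN : 1 ≤ N) (z : Fin N → ℂ)
    (hz : ∀ j, 0 < (z j).im) (hdist : Function.Injective z)
    (ψ : Fin N → Fin 2 → ℂ) (hψ : ∀ j, ψ j ≠ 0)
    (φ : Fin N → Fin 2 → ℂ)
    (hφ : ∀ j, φ j = ∑ k, (gramM N z ψ)⁻¹ j k • ψ k) :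
    ∀ j k, (gramM N z ψ)⁻¹ j k
      = Complex.I * herm (φ k) (φ j) / (z k - (starRingEnd ℂ) (z j)) := by
  intro j k
  have hne : z k - (starRingEnd ℂ) (z j) ≠ 0 := by
    intro h
    have := congrArg Complex.im h
    simp at this
    linarith [hz j, hz k]
  have h1 := statement9_aux N z hz ψ
  have h2 := statement9_herm N z ψ
  generalize gramM N z ψ = M at *
  have hΦ : Matrix.of φ = M⁻¹ * Matrix.of ψ := by
    ext i a
    simp [Matrix.mul_apply, hφ, Finset.sum_apply]
  by_cases hu : IsUnit M.det
  · -- multiply the displacement equation by the inverse on both sides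
    have h3 : M⁻¹ * Matrix.diagonal z - Matrix.diagonal (fun k => (starRingEnd ℂ) (z k)) * M⁻¹
        = Complex.I • (Matrix.of φ * (Matrix.of φ).conjTranspose) := by
      rw [hΦ, Matrix.conjTranspose_mul, Matrix.conjTranspose_nonsing_inv, h2]
      have h4 := congrArg (fun X => M⁻¹ * X * M⁻¹) h1
      simp only [Matrix.mul_sub, Matrix.sub_mul, Matrix.mul_smul, Matrix.smul_mul] at h4
      rw [← Matrix.mul_assoc, Matrix.mul_assoc (M⁻¹ * Matrix.diagonal z),
        Matrix.mul_nonsing_inv _ hu, Matrix.mul_one, ← Matrix.mul_assoc,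
        Matrix.nonsing_inv_mul _ hu, Matrix.one_mul] at h4
      rw [h4]
      simp only [Matrix.mul_assoc]
    have h5 := congrFun (congrFun h3 j) k
    rw [Matrix.sub_apply, Matrix.diagonal_mul, Matrix.mul_diagonal] at h5
    simp only [Matrix.smul_apply,
      Matrix.mul_apply, Matrix.conjTranspose_apply, Matrix.of_apply, smul_eq_mul,
      Fin.sum_univ_two, RCLike.star_def] at h5
    rw [eq_div_iff hne]
    simp only [herm, Fin.sum_univ_two]
    linear_combination h5
  · have h0 := Matrix.nonsing_inv_apply_not_isUnit M hu
    simp [herm, hφ, h0]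
end
end

section
/- Let z₁, z₂ be complex numbers with Im z₁ > 0 and Im z₂ > 0, and let γ₁, γ₂ ∈ ℂ. Let M be the 2×2 matrix with entries M_{jk} = 2i·cosh(γ_j + conj(γ_k))/(z_j − conj(z_k)) for j,k ∈ {1,2}. Then (Π_{i,j=1}^{2} (conj(z_i) − z_j))·det M = 4·|z₁ − z₂|²·cosh(2 Re γ₁)·cosh(2 Re γ₂) + 16·(Im z₁)·(Im z₂)·|sinh(γ₁ − γ₂)|². -/
noncomputable section

/-- the two-soliton denominator. For `z₁, z₂` in the upper half-plane and
`γ₁, γ₂ ∈ ℂ`, with `M_{jk} = 2i·cosh(γ_j + conj(γ_k))/(z_j − conj(z_k))`, one has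
`(Π_{i,j} (conj(z_i) − z_j))·det M
  = 4|z₁ − z₂|²·cosh(2 Re γ₁)·cosh(2 Re γ₂) + 16·Im z₁·Im z₂·|sinh(γ₁ − γ₂)|²`. -/
theorem statement12 (z₁ z₂ γ₁ γ₂ : ℂ) (h₁ : 0 < z₁.im) (h₂ : 0 < z₂.im)
    (M : Matrix (Fin 2) (Fin 2) ℂ)
    (hM : M = Matrix.of fun j k : Fin 2 =>
      2 * Complex.I * Complex.cosh (![γ₁, γ₂] j + (starRingEnd ℂ) (![γ₁, γ₂] k)) /
        (![z₁, z₂] j - (starRingEnd ℂ) (![z₁, z₂] k))) :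
    (((starRingEnd ℂ) z₁ - z₁) * ((starRingEnd ℂ) z₁ - z₂) *
      ((starRingEnd ℂ) z₂ - z₁) * ((starRingEnd ℂ) z₂ - z₂)) * M.det
      = ((4 * Complex.normSq (z₁ - z₂) * Real.cosh (2 * γ₁.re) * Real.cosh (2 * γ₂.re) +
          16 * z₁.im * z₂.im * Complex.normSq (Complex.sinh (γ₁ - γ₂)) : ℝ) : ℂ) := by
  have key : Complex.cosh (γ₁ + (starRingEnd ℂ) γ₁) * Complex.cosh (γ₂ + (starRingEnd ℂ) γ₂)
      - Complex.cosh (γ₁ + (starRingEnd ℂ) γ₂) * Complex.cosh (γ₂ + (starRingEnd ℂ) γ₁)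
      = Complex.sinh (γ₁ - γ₂) * Complex.sinh ((starRingEnd ℂ) γ₁ - (starRingEnd ℂ) γ₂) := by
    simp only [Complex.cosh_add, Complex.sinh_sub]
    ring
  have n : ∀ a b : ℂ, 0 < a.im → 0 < b.im → a - (starRingEnd ℂ) b ≠ 0 := by
    intro a b ha hb h
    have := congrArg Complex.im h
    simp at this
    linarith
  have n11 := n z₁ z₁ h₁ h₁
  have n12 := n z₁ z₂ h₁ h₂
  have n21 := n z₂ z₁ h₂ h₁
  have n22 := n z₂ z₂ h₂ h₂
  have e : ∀ z : ℂ, (z.im : ℂ) = -(Complex.I * (z - (starRingEnd ℂ) z)) / 2 := by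
    intro z
    rw [Complex.sub_conj]
    push_cast
    linear_combination (z.im : ℂ) * Complex.I_sq
  have r : ∀ z : ℂ, ((2 * z.re : ℝ) : ℂ) = z + (starRingEnd ℂ) z := by
    intro z
    rw [Complex.add_conj]
  rw [hM, Matrix.det_fin_two]
  simp only [Matrix.of_apply, Matrix.cons_val_zero, Matrix.cons_val_one]
  rw [Complex.ofReal_add, Complex.ofReal_mul, Complex.ofReal_mul, Complex.ofReal_mul,
    Complex.ofReal_mul, Complex.ofReal_mul, Complex.ofReal_mul, Complex.ofReal_cosh,
    Complex.ofReal_cosh, r, r, e, e, ← Complex.mul_conj, ← Complex.mul_conj,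
    ← Complex.sinh_conj, map_sub, map_sub, ← key]
  generalize (starRingEnd ℂ) z₁ = w₁ at *
  generalize (starRingEnd ℂ) z₂ = w₂ at *
  generalize Complex.cosh (γ₁ + (starRingEnd ℂ) γ₁) = c11
  generalize Complex.cosh (γ₂ + (starRingEnd ℂ) γ₂) = c22
  generalize Complex.cosh (γ₁ + (starRingEnd ℂ) γ₂) = c12
  generalize Complex.cosh (γ₂ + (starRingEnd ℂ) γ₁) = c21
  have hI := Complex.I_sq
  generalize Complex.I = I at *
  push_cast
  have l : ((w₁ - z₁) * (w₁ - z₂) * (w₂ - z₁) * (w₂ - z₂)) *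
      (2 * I * c11 / (z₁ - w₁) * (2 * I * c22 / (z₂ - w₂))
        - 2 * I * c12 / (z₁ - w₂) * (2 * I * c21 / (z₂ - w₁)))
      = 4 * I ^ 2 * (c11 * c22 * ((z₂ - w₁) * (z₁ - w₂))
        - c12 * c21 * ((z₁ - w₁) * (z₂ - w₂))) := by
    field_simp
    ring
  rw [l]
  linear_combination (4 * (c11 * c22 * ((z₂ - w₁) * (z₁ - w₂))
        - c12 * c21 * ((z₁ - w₁) * (z₂ - w₂)))
        - 4 * (z₁ - w₁) * (z₂ - w₂) * (c11 * c22 - c12 * c21)) * hI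
end
end

section
/- For all complex numbers z₁, z₂, γ₁, γ₂ the following identity holds: 4·|z₁ − z₂|²·cosh(2 Re γ₁)·cosh(2 Re γ₂) + 16·(Im z₁)·(Im z₂)·|sinh(γ₁ − γ₂)|² = 2·|z₁ − z₂|²·(|cosh(γ₁ + γ₂)|² + |sinh(γ₁ + γ₂)|² + |cosh(γ₁ − γ₂)|²) + 2·(|z₁ + z₂|² − 4·Re(z₁·z₂))·|sinh(γ₁ − γ₂)|². -/
theorem normSq_cosh_add_normSq_sinh (w : ℂ) :
    Complex.normSq (Complex.cosh w) + Complex.normSq (Complex.sinh w) = Real.cosh (2 * w.re) := by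
  have h1 : Complex.normSq (Complex.cosh w + Complex.sinh w) = Real.exp (2 * w.re) := by
    rw [Complex.cosh_add_sinh, Complex.normSq_eq_norm_sq, Complex.norm_exp, sq, ← Real.exp_add]
    ring_nf
  have h2 : Complex.normSq (Complex.cosh w - Complex.sinh w) = Real.exp (-(2 * w.re)) := by
    rw [Complex.cosh_sub_sinh, Complex.normSq_eq_norm_sq, Complex.norm_exp, sq, ← Real.exp_add,
      Complex.neg_re]
    ring_nf
  rw [Complex.normSq_add] at h1
  rw [Complex.normSq_sub] at h2
  rw [Real.cosh_eq]
  linarith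

/-- the two-soliton denominator identity. For all complex `z₁, z₂, γ₁, γ₂`:
`4|z₁ − z₂|²·cosh(2 Re γ₁)·cosh(2 Re γ₂) + 16·Im z₁·Im z₂·|sinh(γ₁ − γ₂)|²
 = 2|z₁ − z₂|²·(|cosh(γ₁ + γ₂)|² + |sinh(γ₁ + γ₂)|² + |cosh(γ₁ − γ₂)|²)
   + 2·(|z₁ + z₂|² − 4·Re(z₁z₂))·|sinh(γ₁ − γ₂)|²`. -/
theorem statement13 (z₁ z₂ γ₁ γ₂ : ℂ) :
    4 * Complex.normSq (z₁ - z₂) * Real.cosh (2 * γ₁.re) * Real.cosh (2 * γ₂.re) +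
      16 * z₁.im * z₂.im * Complex.normSq (Complex.sinh (γ₁ - γ₂))
    = 2 * Complex.normSq (z₁ - z₂) *
        (Complex.normSq (Complex.cosh (γ₁ + γ₂)) + Complex.normSq (Complex.sinh (γ₁ + γ₂)) +
          Complex.normSq (Complex.cosh (γ₁ - γ₂))) +
      2 * (Complex.normSq (z₁ + z₂) - 4 * (z₁ * z₂).re) *
        Complex.normSq (Complex.sinh (γ₁ - γ₂)) := by
  have ha := normSq_cosh_add_normSq_sinh (γ₁ + γ₂)
  have hb := normSq_cosh_add_normSq_sinh (γ₁ - γ₂)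
  rw [Complex.add_re, mul_add, Real.cosh_add] at ha
  rw [Complex.sub_re, mul_sub, Real.cosh_sub] at hb
  have hz : Complex.normSq (z₁ + z₂) - 4 * (z₁ * z₂).re
      = Complex.normSq (z₁ - z₂) + 8 * z₁.im * z₂.im := by
    simp only [Complex.normSq_apply, Complex.add_re, Complex.add_im, Complex.sub_re,
      Complex.sub_im, Complex.mul_re]
    ring
  rw [hz]
  linear_combination (-2 * Complex.normSq (z₁ - z₂)) * (ha + hb)
end

section
/- Let z₁, z₂ be complex numbers with Im(z₁ + z₂) ≠ 0, and define a₂ = i(z₁ + z₂) − i·Im(z₁² + z₂²)/Im(z₁ + z₂) and a₃ = i(z₁² + z₁z₂ + z₂²) − i·Im(z₁³ + z₂³)/Im(z₁ + z₂). Then Im(z₁ + z₂)·Im(a₂·conj(a₃)) = −2·(Im z₁)·(Im z₂)·|z₁ − conj(z₂)|². In particular, if Im z₁ > 0 and Im z₂ > 0 then a₂ and a₃ are linearly independent over ℝ. -/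
/-- nondegeneracy of the two-soliton phase coefficients. With
`a₂ = i(z₁+z₂) − i·Im(z₁²+z₂²)/Im(z₁+z₂)` and
`a₃ = i(z₁²+z₁z₂+z₂²) − i·Im(z₁³+z₂³)/Im(z₁+z₂)`, one has
`Im(z₁+z₂)·Im(a₂·conj(a₃)) = −2·Im z₁·Im z₂·|z₁ − conj(z₂)|²`; in particular, if
`Im z₁ > 0` and `Im z₂ > 0` then `a₂` and `a₃` are linearly independent over `ℝ`. -/
theorem statement14 (z₁ z₂ : ℂ) (h : (z₁ + z₂).im ≠ 0) (a₂ a₃ : ℂ)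
    (ha₂ : a₂ = Complex.I * (z₁ + z₂) -
      Complex.I * (((z₁ ^ 2 + z₂ ^ 2).im / (z₁ + z₂).im : ℝ) : ℂ))
    (ha₃ : a₃ = Complex.I * (z₁ ^ 2 + z₁ * z₂ + z₂ ^ 2) -
      Complex.I * (((z₁ ^ 3 + z₂ ^ 3).im / (z₁ + z₂).im : ℝ) : ℂ)) :
    (z₁ + z₂).im * (a₂ * (starRingEnd ℂ) a₃).im
      = -2 * z₁.im * z₂.im * Complex.normSq (z₁ - (starRingEnd ℂ) z₂) ∧
    (0 < z₁.im → 0 < z₂.im → LinearIndependent ℝ ![a₂, a₃]) := by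
  have key : (z₁ + z₂).im * (a₂ * (starRingEnd ℂ) a₃).im
      = -2 * z₁.im * z₂.im * Complex.normSq (z₁ - (starRingEnd ℂ) z₂) := by
    subst ha₂ ha₃
    obtain ⟨x, y⟩ := z₁
    obtain ⟨u, v⟩ := z₂
    simp only [Complex.add_im] at h
    simp only [Complex.normSq_apply, pow_succ, pow_zero, one_mul, Complex.mul_im, Complex.mul_re,
      Complex.add_im, Complex.add_re, Complex.sub_im, Complex.sub_re, Complex.conj_re,
      Complex.conj_im, Complex.I_re, Complex.I_im, Complex.ofReal_re, Complex.ofReal_im]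
    field_simp
    ring
  refine ⟨key, fun h1 h2 => ?_⟩
  have hne : (a₂ * (starRingEnd ℂ) a₃).im ≠ 0 := by
    intro h0
    rw [h0, mul_zero] at key
    have hn : 0 < Complex.normSq (z₁ - (starRingEnd ℂ) z₂) := by
      rw [Complex.normSq_pos]
      intro hz
      have := congrArg Complex.im hz
      simp at this
      linarith
    have := mul_pos (mul_pos h1 h2) hn
    linarith
  rw [LinearIndependent.pair_iff]
  intro s t hst
  have hr := congrArg Complex.re hst
  have hi := congrArg Complex.im hst
  simp at hr hi
  simp only [Complex.mul_im, Complex.conj_re, Complex.conj_im] at hne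
  constructor
  · refine (mul_eq_zero.mp ?_).resolve_right hne
    linear_combination a₃.re * hi - a₃.im * hr
  · refine (mul_eq_zero.mp ?_).resolve_right hne
    linear_combination a₂.im * hr - a₂.re * hi
end

section
/- For every N ≥ 1 and R > 0 there exists a constant C = C(N,R) with the following property: for all s, σ ∈ ℂ^N with ‖s‖ ≤ R and ‖σ‖ ≤ R there exist z, w ∈ ℂ^N such that s(z) = s, s(w) = σ, and ‖z − w‖ ≤ C·‖s − σ‖^{1/N}, where s(z) = (e₁(z),…,e_N(z)) denotes the vector of elementary symmetric polynomials of the coordinates of z and ‖·‖ is the Euclidean norm on ℂ^N. -/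
noncomputable section

/-- The `k`-th elementary symmetric polynomial of `z₁,…,z_N`. -/
def esym (N : ℕ) (z : Fin N → ℂ) (k : ℕ) : ℂ :=
  ∑ t ∈ Finset.powersetCard k (Finset.univ : Finset (Fin N)), ∏ j ∈ t, z j

/-- The Euclidean (ℓ²) norm on `ℂ^N`. -/
def enorm' (N : ℕ) (z : Fin N → ℂ) : ℝ := Real.sqrt (∑ j, Complex.normSq (z j))

/-- The vector `s(z) = (e₁(z),…,e_N(z))` of elementary symmetric polynomials. -/
def sVec (N : ℕ) (z : Fin N → ℂ) : Fin N → ℂ := fun k => esym N z (k.val + 1)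

open Polynomial in
/-- The monic polynomial with coefficient vector `s` (up to sign). -/
def cPoly (N : ℕ) (s : Fin N → ℂ) : ℂ[X] :=
  X ^ N + ∑ k : Fin N, C ((-1) ^ (k.val + 1) * s k) * X ^ (N - (k.val + 1))

open Polynomial in
lemma cPoly_sVec (N : ℕ) (z : Fin N → ℂ) :
    ∏ i, (X - C (z i)) = cPoly N (sVec N z) := by
  have h := Multiset.prod_X_sub_X_eq_sum_esymm ((Finset.univ : Finset (Fin N)).val.map z)
  rw [Multiset.map_map] at h
  have h2 : ∏ i, (X - C (z i)) = (Multiset.map ((fun t => X - C t) ∘ z) Finset.univ.val).prod := rfl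
  rw [h2, h, Multiset.card_map]
  have h3 : Multiset.card (Finset.univ : Finset (Fin N)).val = N := by simp
  rw [h3, Finset.sum_range_succ', cPoly, add_comm]
  congr 1
  · simp [Multiset.esymm]
  · rw [← Fin.sum_univ_eq_sum_range
      (fun k => (-1) ^ (k + 1) * (C (((Finset.univ : Finset (Fin N)).val.map z).esymm (k+1)) *
        X ^ (N - (k + 1))))]
    refine Finset.sum_congr rfl fun k _ => ?_
    rw [Finset.esymm_map_val]
    simp only [sVec, esym, map_mul, map_pow, map_neg, map_one, mul_assoc]

open Polynomial in
lemma cPoly_coeff (N : ℕ) (s : Fin N → ℂ) (k : Fin N) :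
    (cPoly N s).coeff (N - (k.val + 1)) = (-1) ^ (k.val + 1) * s k := by
  have hk := k.2
  rw [cPoly, coeff_add, finsetSum_coeff, coeff_X_pow, if_neg (by omega), zero_add,
    Finset.sum_eq_single k]
  · rw [coeff_C_mul, coeff_X_pow, if_pos rfl, mul_one]
  · intro b _ hb
    have hb2 := b.2
    have : b.val ≠ k.val := fun h => hb (Fin.ext h)
    rw [coeff_C_mul, coeff_X_pow, if_neg (by omega), mul_zero]
  · simp

lemma cPoly_inj (N : ℕ) {s t : Fin N → ℂ} (h : cPoly N s = cPoly N t) : s = t := by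
  funext k
  have h1 := cPoly_coeff N s k
  rw [h, cPoly_coeff] at h1
  exact (mul_left_cancel₀ (pow_ne_zero _ (by norm_num)) h1).symm

open Polynomial in
lemma cPoly_tail_degree (N : ℕ) (s : Fin N → ℂ) :
    (∑ k : Fin N, C ((-1) ^ (k.val + 1) * s k) * X ^ (N - (k.val + 1))).degree < (N : WithBot ℕ) := by
  rw [← mem_degreeLT]
  refine Submodule.sum_mem _ fun k _ => ?_
  rw [mem_degreeLT]
  refine lt_of_le_of_lt (degree_C_mul_X_pow_le _ _) ?_
  have := k.2
  exact_mod_cast (by omega : N - (k.val + 1) < N)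

open Polynomial in
lemma sVec_surj (N : ℕ) : Function.Surjective (sVec N) := by
  intro s
  have hm : (cPoly N s).Monic := monic_X_pow_add (cPoly_tail_degree N s)
  have hd : (cPoly N s).natDegree = N := by
    apply natDegree_eq_of_degree_eq_some
    rw [cPoly, degree_add_eq_left_of_degree_lt, degree_X_pow]
    rw [degree_X_pow]; exact cPoly_tail_degree N s
  have hs := IsAlgClosed.splits (cPoly N s)
  have hc : Multiset.card (cPoly N s).roots = N := by
    rw [splits_iff_card_roots.1 hs, hd]
  have hp := hs.eq_prod_roots_of_monic hm
  obtain ⟨l, hl⟩ := Quot.exists_rep (cPoly N s).roots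
  have hleq : (l : Multiset ℂ) = (cPoly N s).roots := hl
  rw [← hleq] at hp hc
  have hlen : l.length = N := by simpa using hc
  subst hlen
  refine ⟨fun i => l.get i, cPoly_inj _ ?_⟩
  rw [← cPoly_sVec, hp]
  simp only [Multiset.map_coe, Multiset.prod_coe]
  rw [← List.prod_ofFn]
  congr 1
  apply List.ext_get <;> simp

open Polynomial in
lemma sVec_eq_perm (N : ℕ) {z w : Fin N → ℂ} (h : sVec N z = sVec N w) :
    ∃ π : Equiv.Perm (Fin N), ∀ i, w (π i) = z i := by
  classical
  have h1 : ∏ i, (X - C (z i)) = ∏ i, (X - C (w i)) := by rw [cPoly_sVec, cPoly_sVec, h]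
  have key : ∀ u : Fin N → ℂ, (∏ i, (X - C (u i))).roots = Finset.univ.val.map u := by
    intro u
    rw [← roots_multiset_prod_X_sub_C (Finset.univ.val.map u), Multiset.map_map]
    rfl
  have h2 : (Finset.univ.val.map z : Multiset ℂ) = Finset.univ.val.map w := by
    rw [← key, ← key, h1]
  have h3 : ∀ c, Nonempty ({a // z a = c} ≃ {b // w b = c}) := by
    intro c
    have h4 := congrArg (Multiset.count c) h2
    rw [Multiset.count_map, Multiset.count_map] at h4
    refine ⟨Fintype.equivOfCardEq ?_⟩
    rw [Fintype.card_subtype, Fintype.card_subtype]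
    simp only [eq_comm (a := c)] at h4
    exact h4
  exact ⟨Equiv.ofFiberEquiv fun c => (h3 c).some, fun i => Equiv.ofFiberEquiv_map _ i⟩

lemma sVec_perm (N : ℕ) (z : Fin N → ℂ) (π : Equiv.Perm (Fin N)) :
    sVec N (fun i => z (π i)) = sVec N z := by
  apply cPoly_inj
  rw [← cPoly_sVec, ← cPoly_sVec]
  exact Equiv.prod_comp π (fun i => Polynomial.X - Polynomial.C (z i))

lemma sVec_cont (N : ℕ) : Continuous (sVec N) := by
  unfold sVec esym
  fun_prop

lemma eval_eq (N : ℕ) (z : Fin N → ℂ) (x : ℂ) :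
    (cPoly N (sVec N z)).eval x = ∏ i, (x - z i) := by
  rw [← cPoly_sVec, Polynomial.eval_prod]; simp

lemma eval_cPoly (N : ℕ) (s : Fin N → ℂ) (x : ℂ) :
    (cPoly N s).eval x = x ^ N + ∑ k : Fin N, (-1) ^ (k.val + 1) * s k * x ^ (N - (k.val + 1)) := by
  simp [cPoly, Polynomial.eval_finsetSum]

lemma tail_bound (N : ℕ) (s : Fin N → ℂ) (x : ℂ) (B : ℝ) (hB : 1 ≤ B) (hx : ‖x‖ ≤ B) :
    ‖∑ k : Fin N, (-1) ^ (k.val + 1) * s k * x ^ (N - (k.val + 1))‖ ≤ N * (‖s‖ * B ^ (N - 1)) := by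
  refine (norm_sum_le _ _).trans ?_
  refine (Finset.sum_le_card_nsmul _ _ (‖s‖ * B ^ (N-1)) ?_).trans ?_
  · intro k _
    rw [norm_mul, norm_mul, norm_pow, norm_pow, norm_neg, norm_one, one_pow, one_mul]
    gcongr
    · exact norm_le_pi_norm s k
    · calc ‖x‖ ^ (N - (k.val + 1)) ≤ B ^ (N - (k.val + 1)) := by gcongr
        _ ≤ B ^ (N - 1) := pow_le_pow_right₀ hB (by omega)
  · simp

lemma root_bound (N : ℕ) (hN : 1 ≤ N) (z : Fin N → ℂ) (i : Fin N) :
    ‖z i‖ ≤ 1 + N * ‖sVec N z‖ := by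
  have h0 : (0:ℝ) ≤ N * ‖sVec N z‖ := by positivity
  rcases le_total ‖z i‖ 1 with h | h
  · linarith
  have h1 : (cPoly N (sVec N z)).eval (z i) = 0 := by
    rw [eval_eq]; exact Finset.prod_eq_zero (Finset.mem_univ i) (sub_self _)
  rw [eval_cPoly] at h1
  have h2 := tail_bound N (sVec N z) (z i) ‖z i‖ h le_rfl
  rw [← neg_eq_of_add_eq_zero_right h1, norm_neg, norm_pow] at h2
  obtain ⟨M, rfl⟩ : ∃ M, N = M + 1 := ⟨N - 1, by omega⟩
  rw [Nat.add_sub_cancel, pow_succ] at h2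
  have h3 : 0 < ‖z i‖ ^ M := by positivity
  have : ‖z i‖ ≤ ((M + 1 : ℕ) : ℝ) * ‖sVec (M+1) z‖ := by
    by_contra hcon
    push Not at hcon
    nlinarith
  linarith

lemma sVec_closedMap (N : ℕ) (hN : 1 ≤ N) : IsClosedMap (sVec N) := by
  apply IsProperMap.isClosedMap
  rw [isProperMap_iff_isCompact_preimage]
  refine ⟨sVec_cont N, fun K hK => ?_⟩
  apply Metric.isCompact_of_isClosed_isBounded (hK.isClosed.preimage (sVec_cont N))
  obtain ⟨R, hR⟩ := hK.isBounded.exists_norm_le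
  rw [isBounded_iff_forall_norm_le]
  refine ⟨1 + N * R, fun z hz => ?_⟩
  have hzR := hR _ hz
  have : 0 ≤ R := (norm_nonneg _).trans hzR
  rw [pi_norm_le_iff_of_nonneg (by positivity)]
  intro i
  refine (root_bound N hN z i).trans ?_
  gcongr

lemma sVec_openMap (N : ℕ) (hN : 1 ≤ N) : IsOpenMap (sVec N) := by
  intro V hV
  let Vsym : Set (Fin N → ℂ) := ⋃ π : Equiv.Perm (Fin N), Set.preimage (fun z i => z (π i)) V
  have hVsym : IsOpen Vsym := isOpen_iUnion fun π => hV.preimage (by fun_prop)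
  have : Set.image (sVec N) V = (Set.image (sVec N) (Vsymᶜ))ᶜ := by
    ext s
    constructor
    · rintro ⟨z, hz, rfl⟩ ⟨w, hw, hwz⟩
      obtain ⟨π, hπ⟩ := sVec_eq_perm N hwz.symm
      apply hw
      refine Set.mem_iUnion.2 ⟨π, ?_⟩
      have : (fun i => w (π i)) = z := funext hπ
      simpa [this] using hz
    · intro hs
      obtain ⟨z, rfl⟩ := sVec_surj N s
      have hz : z ∈ Vsym := by
        by_contra hcon
        exact hs ⟨z, hcon, rfl⟩
      obtain ⟨π, hπ⟩ := Set.mem_iUnion.1 hz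
      exact ⟨_, hπ, sVec_perm N z π⟩
  rw [this]
  exact (sVec_closedMap N hN _ hVsym.isClosed_compl).isOpen_compl

lemma near_root (N : ℕ) (hN : 1 ≤ N) (z w : Fin N → ℂ) (R B r e : ℝ)
    (hB : B = 1 + N * R) (hR : 0 ≤ R) (hw : ‖sVec N w‖ ≤ R) (hr : 0 ≤ r)
    (he : ‖sVec N z - sVec N w‖ ≤ e)
    (hre : r ^ N = N * (e * B ^ (N - 1))) (i : Fin N) : ∃ j, ‖w i - z j‖ ≤ r := by
  by_contra! hcon
  have hx : ‖w i‖ ≤ B := by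
    rw [hB]; refine (root_bound N hN w i).trans ?_
    gcongr
  have hB1 : 1 ≤ B := by rw [hB]; have : 0 ≤ N * R := by positivity
                         linarith
  have h1 : ∏ j, (w i - z j) = ∏ j, (w i - z j) - ∏ j, (w i - w j) := by
    rw [Finset.prod_eq_zero (f := fun j => w i - w j) (Finset.mem_univ i) (sub_self (w i)), sub_zero]
  rw [← eval_eq, ← eval_eq] at h1
  have h2 : (cPoly N (sVec N z)).eval (w i) - (cPoly N (sVec N w)).eval (w i)
      = ∑ k : Fin N, (-1) ^ (k.val + 1) * (sVec N z - sVec N w) k * (w i) ^ (N - (k.val + 1)) := by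
    rw [eval_cPoly, eval_cPoly, add_sub_add_left_eq_sub, ← Finset.sum_sub_distrib]
    refine Finset.sum_congr rfl fun k _ => ?_
    rw [Pi.sub_apply]; ring
  have h3 := tail_bound N (sVec N z - sVec N w) (w i) B hB1 hx
  rw [← h2, ← h1, eval_eq, norm_prod] at h3
  have h4 : r ^ N < ∏ j, ‖w i - z j‖ := by
    rcases hr.eq_or_lt with h0 | h0
    · rw [← h0, zero_pow (by omega)]
      exact Finset.prod_pos fun j _ => lt_of_le_of_lt hr (hcon j)
    · have : r ^ N = ∏ _j : Fin N, r := by simp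
      rw [this]
      have : Nonempty (Fin N) := ⟨i⟩
      exact Finset.prod_lt_prod_of_nonempty (fun _ _ => h0) (fun j _ => hcon j) Finset.univ_nonempty
  have h5 : (N:ℝ) * (‖sVec N z - sVec N w‖ * B ^ (N - 1)) ≤ N * (e * B ^ (N - 1)) := by
    gcongr
  linarith

/-- Proximity graph of the roots. -/
def proxGraph (N : ℕ) (z : Fin N → ℂ) (r : ℝ) : SimpleGraph (Fin N) :=
  SimpleGraph.fromRel fun i j => ‖z i - z j‖ ≤ 2 * r

lemma prox_reach (N : ℕ) (z : Fin N → ℂ) (r : ℝ) (i j : Fin N) (h : ‖z i - z j‖ ≤ 2 * r) :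
    (proxGraph N z r).Reachable i j := by
  by_cases hij : i = j
  · subst hij; exact SimpleGraph.Reachable.refl _
  · exact SimpleGraph.Adj.reachable ((SimpleGraph.fromRel_adj _ _ _).2 ⟨hij, Or.inl h⟩)

lemma prox_walk (N : ℕ) (z : Fin N → ℂ) (r : ℝ) {i j : Fin N} (p : (proxGraph N z r).Walk i j) :
    ‖z i - z j‖ ≤ p.length * (2 * r) := by
  induction p with
  | nil => simp
  | @cons u v w h p ih =>
    have h1 : ‖z u - z v‖ ≤ 2 * r := by
      rcases ((SimpleGraph.fromRel_adj _ _ _).1 h).2 with h | h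
      · exact h
      · rwa [norm_sub_rev]
    have := norm_sub_le_norm_sub_add_norm_sub (z u) (z v) (z w)
    rw [SimpleGraph.Walk.length_cons]
    push_cast
    linarith

lemma prox_bound (N : ℕ) (z : Fin N → ℂ) (r : ℝ) (hr : 0 ≤ r) {i j : Fin N}
    (h : (proxGraph N z r).Reachable i j) : ‖z i - z j‖ ≤ N * (2 * r) := by
  classical
  obtain ⟨p, hp⟩ := h.exists_isPath
  have h1 := hp.length_lt
  rw [Fintype.card_fin] at h1
  refine (prox_walk N z r p).trans ?_
  gcongr

lemma main_sup (N : ℕ) (hN : 1 ≤ N) (R B r : ℝ) (hB : B = 1 + N * R) (hR : 0 ≤ R) (hr : 0 ≤ r)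
    (s σ : Fin N → ℂ) (hs : ‖s‖ ≤ R) (hσ : ‖σ‖ ≤ R)
    (hre : r ^ N = N * (‖s - σ‖ * B ^ (N - 1))) :
    ∃ z w : Fin N → ℂ, sVec N z = s ∧ sVec N w = σ ∧ ∀ i, ‖z i - w i‖ ≤ (2 * N + 1) * r := by
  obtain ⟨z, rfl⟩ := sVec_surj N s
  have hη : ∃ η > 0, ∀ i j, ‖z i - z j‖ < 2 * r + η → ‖z i - z j‖ ≤ 2 * r := by
    have : ∀ᶠ η : ℝ in nhdsWithin 0 (Set.Ioi 0),
        ∀ i j, ‖z i - z j‖ < 2 * r + η → ‖z i - z j‖ ≤ 2 * r := by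
      rw [Filter.eventually_all]; intro i
      rw [Filter.eventually_all]; intro j
      by_cases h : ‖z i - z j‖ ≤ 2 * r
      · exact Filter.Eventually.of_forall fun _ _ => h
      · push Not at h
        have h2 : Set.Iio (‖z i - z j‖ - 2 * r) ∈ nhdsWithin (0:ℝ) (Set.Ioi 0) :=
          mem_nhdsWithin_of_mem_nhds (Iio_mem_nhds (by linarith))
        filter_upwards [h2] with η hη h3
        have : η < ‖z i - z j‖ - 2 * r := hη
        linarith
    obtain ⟨η, h1, h2⟩ := (this.and self_mem_nhdsWithin).exists
    exact ⟨η, h2, h1⟩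
  obtain ⟨η, hη0, hη⟩ := hη
  let G := proxGraph N z r
  let D : Set (Fin N → ℂ) := {w | ∀ i, ∃ j, G.Reachable i j ∧ ‖w i - z j‖ ≤ r}
  let Dopen : Set (Fin N → ℂ) := {w | ∀ i, ∃ j, G.Reachable i j ∧ ‖w i - z j‖ < r + η}
  have hD : IsClosed D := by
    have : D = ⋂ i, ⋃ j, ⋃ (_ : G.Reachable i j), {w | ‖w i - z j‖ ≤ r} := by
      ext w; simp [D]
    rw [this]
    refine isClosed_iInter fun i => isClosed_iUnion_of_finite fun j =>
      isClosed_iUnion_of_finite fun _ => isClosed_le (by fun_prop) (by fun_prop)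
  have hDopen : IsOpen Dopen := by
    have : Dopen = ⋂ i, ⋃ j, ⋃ (_ : G.Reachable i j), {w | ‖w i - z j‖ < r + η} := by
      ext w; simp [Dopen]
    rw [this]
    refine isOpen_iInter_of_finite fun i => isOpen_iUnion fun j =>
      isOpen_iUnion fun _ => isOpen_lt (by fun_prop) (by fun_prop)
  have hDD : D ⊆ Dopen := by
    intro w hw i
    obtain ⟨j, h1, h2⟩ := hw i
    exact ⟨j, h1, by linarith⟩
  let L := segment ℝ (sVec N z) σ
  have hL : ∀ w, sVec N w ∈ L → w ∈ Dopen → w ∈ D := by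
    intro w hw hwD i
    obtain ⟨j, h1, h2⟩ := hwD i
    have hwR : ‖sVec N w‖ ≤ R := by
      have := (convex_closedBall (0 : Fin N → ℂ) R).segment_subset (x := sVec N z) (y := σ)
        (by simpa using hs) (by simpa using hσ) hw
      simpa using this
    have he : ‖sVec N z - sVec N w‖ ≤ ‖sVec N z - σ‖ := by
      have := norm_sub_le_of_mem_segment hw
      rw [norm_sub_rev, norm_sub_rev _ σ]
      simpa using this
    obtain ⟨k, hk⟩ := near_root N hN z w R B r _ hB hR hwR hr he hre i
    refine ⟨k, h1.trans (prox_reach N z r j k (hη j k ?_)), hk⟩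
    have := norm_sub_le_norm_sub_add_norm_sub (z j) (w i) (z k)
    rw [norm_sub_rev (z j) (w i)] at this
    linarith
  have hLc : IsPreconnected L := (convex_segment _ _).isPreconnected
  rw [isPreconnected_iff_subset_of_disjoint] at hLc
  have hsD : z ∈ D := fun i => ⟨i, SimpleGraph.Reachable.refl _, by simpa using hr⟩
  have hfin : σ ∈ Set.image (sVec N) Dopen := by
    have hcov : L ⊆ Set.image (sVec N) Dopen ∪ (Set.image (sVec N) D)ᶜ := by
      intro x _
      by_cases hx : x ∈ Set.image (sVec N) D
      · exact Or.inl (Set.image_mono hDD hx)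
      · exact Or.inr hx
    have hdis : L ∩ (Set.image (sVec N) Dopen ∩ (Set.image (sVec N) D)ᶜ) = ∅ := by
      rw [Set.eq_empty_iff_forall_notMem]
      rintro x ⟨hxL, ⟨w, hw, rfl⟩, hx⟩
      exact hx ⟨w, hL w hxL hw, rfl⟩
    rcases hLc (Set.image (sVec N) Dopen) (Set.image (sVec N) D)ᶜ (sVec_openMap N hN _ hDopen)
      (sVec_closedMap N hN _ hD).isOpen_compl hcov hdis with h | h
    · exact h (right_mem_segment ℝ _ _)
    · exact absurd ⟨z, hsD, rfl⟩ (h (left_mem_segment ℝ _ _))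
  obtain ⟨w, hw, rfl⟩ := hfin
  refine ⟨z, w, rfl, rfl, fun i => ?_⟩
  obtain ⟨j, h1, h2⟩ := hL w (right_mem_segment ℝ _ _) hw i
  have h3 := prox_bound N z r hr h1
  have := norm_sub_le_norm_sub_add_norm_sub (z i) (z j) (w i)
  rw [norm_sub_rev (z j) (w i)] at this
  linarith

lemma norm_le_enorm (N : ℕ) (z : Fin N → ℂ) : ‖z‖ ≤ enorm' N z := by
  unfold enorm'
  rw [pi_norm_le_iff_of_nonneg (Real.sqrt_nonneg _)]
  intro i
  refine Real.le_sqrt_of_sq_le ?_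
  rw [← Complex.normSq_eq_norm_sq]
  exact Finset.single_le_sum (f := fun j => Complex.normSq (z j))
    (fun j _ => Complex.normSq_nonneg _) (Finset.mem_univ i)

lemma enorm_le (N : ℕ) (z : Fin N → ℂ) (c : ℝ) (hc : 0 ≤ c) (h : ∀ i, ‖z i‖ ≤ c) :
    enorm' N z ≤ N * c := by
  apply Real.sqrt_le_iff.2 ⟨by positivity, ?_⟩
  calc ∑ j, Complex.normSq (z j) ≤ ∑ _j : Fin N, c ^ 2 := by
        refine Finset.sum_le_sum fun j _ => ?_
        rw [Complex.normSq_eq_norm_sq]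
        gcongr
        exact h j
    _ = N * c ^ 2 := by simp
    _ ≤ (N * c) ^ 2 := by
        rw [mul_pow]
        gcongr
        exact_mod_cast Nat.le_self_pow two_ne_zero N

/-- 1/N-Hölder continuity of roots in terms of coefficients: for every
`N ≥ 1` and `R > 0` there is `C = C(N,R)` such that any two coefficient vectors
`s, σ ∈ ℂ^N` of norm at most `R` admit root tuples `z, w` with `s(z) = s`, `s(w) = σ`
and `‖z − w‖ ≤ C·‖s − σ‖^{1/N}`. -/
theorem statement17 (N : ℕ) (hN : 1 ≤ N) (R : ℝ) (hR : 0 < R) :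
    ∃ C : ℝ, ∀ s σ : Fin N → ℂ, enorm' N s ≤ R → enorm' N σ ≤ R →
      ∃ z w : Fin N → ℂ, sVec N z = s ∧ sVec N w = σ ∧
        enorm' N (z - w) ≤ C * enorm' N (s - σ) ^ ((N : ℝ)⁻¹) := by
  let B : ℝ := 1 + N * R
  have hB : 0 ≤ B := by positivity
  let A : ℝ := N * B ^ (N - 1)
  have hA : 0 ≤ A := by positivity
  refine ⟨N * ((2 * N + 1) * A ^ ((N : ℝ)⁻¹)), fun s σ hs hσ => ?_⟩
  let r : ℝ := (A * ‖s - σ‖) ^ ((N : ℝ)⁻¹)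
  have hr : 0 ≤ r := by positivity
  obtain ⟨z, w, h1, h2, h3⟩ := main_sup N hN R B r rfl hR.le hr s σ
    ((norm_le_enorm N s).trans hs) ((norm_le_enorm N σ).trans hσ) (by
      simp only [r]
      rw [Real.rpow_inv_natCast_pow (by positivity) (by omega)]
      simp only [A]; ring)
  refine ⟨z, w, h1, h2, ?_⟩
  refine (enorm_le N (z - w) _ (by positivity) h3).trans ?_
  rw [mul_assoc, mul_assoc]
  gcongr
  simp only [r]
  rw [Real.mul_rpow hA (norm_nonneg _)]
  gcongr
  exact norm_le_enorm N _
end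
end

section
/- Let N ≥ 1 and let U ⊆ ℂ be open. Let e : ℂ^N → ℂ^N be the elementary symmetric polynomial map, e(z) = (e₁(z),…,e_N(z)). Suppose f : U^N → ℂ is analytic and invariant under all permutations of its N coordinates. Then the image S = e(U^N) is an open subset of ℂ^N, and there exists an analytic function g : S → ℂ such that f(z) = g(e(z)) for all z ∈ U^N. -/
noncomputable section

/-- The elementary symmetric polynomial map `e : ℂ^N → ℂ^N`, `e(z) = (e₁(z),…,e_N(z))`. -/
def esymMap (N : ℕ) (z : Fin N → ℂ) : Fin N → ℂ := fun k => esym N z (k.val + 1)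

open Polynomial in
/-- The monic polynomial with signed coefficients `s`. -/
def symPol (N : ℕ) (s : Fin N → ℂ) : ℂ[X] :=
  X ^ N + ∑ k : Fin N, C ((-1) ^ (k.val + 1) * s k) * X ^ (N - 1 - k.val)

open Polynomial in
theorem symPol_esymMap (N : ℕ) (z : Fin N → ℂ) :
    symPol N (esymMap N z) = ∏ j, (X - C (z j)) := by
  have h := Multiset.prod_X_sub_X_eq_sum_esymm (Finset.univ.val.map z)
  rw [Multiset.map_map] at h
  have h2 : (∏ j, (X - C (z j))) =
    (Multiset.map ((fun t => X - C t) ∘ z) Finset.univ.val).prod := rfl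
  rw [h2, h]
  simp only [Multiset.card_map, Finset.card_val, Finset.card_univ, Fintype.card_fin]
  rw [Finset.sum_range_succ']
  unfold symPol
  rw [add_comm]
  congr 1
  · rw [Finset.sum_range]
    refine Finset.sum_congr rfl fun k _ => ?_
    rw [Finset.esymm_map_val]
    have : N - (k.val + 1) = N - 1 - k.val := by omega
    rw [this]
    simp only [esymMap, esym, map_mul, map_pow, map_neg, map_one, mul_assoc]
  · simp [Multiset.esymm]

theorem symPol_eval_esymMap (N : ℕ) (z : Fin N → ℂ) (x : ℂ) :
    (symPol N (esymMap N z)).eval x = ∏ j, (x - z j) := by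
  rw [symPol_esymMap, Polynomial.eval_prod]; simp

theorem symPol_eval (N : ℕ) (s : Fin N → ℂ) (x : ℂ) :
    (symPol N s).eval x = x ^ N + ∑ k : Fin N, ((-1) ^ (k.val + 1) * s k) * x ^ (N - 1 - k.val) := by
  simp [symPol, Polynomial.eval_finsetSum]

open Polynomial in
theorem symPol_coeff (N : ℕ) (s : Fin N → ℂ) (k : Fin N) :
    (symPol N s).coeff (N - 1 - k.val) = (-1) ^ (k.val + 1) * s k := by
  have hk := k.2
  unfold symPol
  rw [coeff_add, coeff_X_pow, if_neg (by omega), zero_add, finsetSum_coeff, Finset.sum_eq_single k]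
  · simp only [coeff_C_mul, coeff_X_pow, if_true, mul_one]
  · intro j _ hj
    have : k.val ≠ j.val := fun h => hj (Fin.ext h.symm)
    have hj2 := j.2
    rw [coeff_C_mul, coeff_X_pow, if_neg (by omega), mul_zero]
  · simp

theorem symPol_inj (N : ℕ) {s t : Fin N → ℂ} (h : symPol N s = symPol N t) : s = t := by
  funext k
  have h1 := symPol_coeff N s k
  rw [h, symPol_coeff] at h1
  exact (mul_left_cancel₀ (pow_ne_zero _ (by norm_num)) h1).symm

open Polynomial in
theorem symPol_degree_lt (N : ℕ) (s : Fin N → ℂ) :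
    (∑ k : Fin N, C ((-1) ^ (k.val + 1) * s k) * X ^ (N - 1 - k.val) : ℂ[X]).degree < (N : WithBot ℕ) := by
  refine (Finset.sup_lt_iff (WithBot.bot_lt_coe N)).2 ?_ |> lt_of_le_of_lt (degree_sum_le _ _)
  intro k _
  refine lt_of_le_of_lt (degree_C_mul_X_pow_le _ _) ?_
  have := k.2
  exact Nat.cast_lt.2 (by omega : N - 1 - k.val < N)

theorem esymMap_surj (N : ℕ) : Function.Surjective (esymMap N) := by
  intro s
  have hm : (symPol N s).Monic := Polynomial.monic_X_pow_add (symPol_degree_lt N s)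
  have hd : (symPol N s).natDegree = N :=
    Polynomial.natDegree_eq_of_degree_eq_some
      (by rw [symPol, Polynomial.degree_add_eq_left_of_degree_lt] <;>
        rw [Polynomial.degree_X_pow]; exact symPol_degree_lt N s)
  have hs := IsAlgClosed.splits (symPol N s)
  have hc : Multiset.card (symPol N s).roots = N := by
    exact (Polynomial.splits_iff_card_roots.1 hs).trans hd
  obtain ⟨l, hl⟩ := Quot.exists_rep (symPol N s).roots
  have hl' : (symPol N s).roots = (l : Multiset ℂ) := hl.symm
  have hlen : l.length = N := by rw [← hc, hl']; simp
  subst hlen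
  refine ⟨l.get, symPol_inj _ ?_⟩
  rw [symPol_esymMap, ← Polynomial.prod_multiset_X_sub_C_of_monic_of_roots_card_eq hm (hc.trans hd.symm), hl']
  rw [Multiset.map_coe, Multiset.prod_coe, ← List.prod_ofFn]
  congr 1
  conv_rhs => rw [← List.ofFn_get l]
  rw [List.map_ofFn]
  rfl

theorem esymMap_eq_imp (N : ℕ) {z w : Fin N → ℂ} (h : esymMap N z = esymMap N w) :
    ∃ π : Equiv.Perm (Fin N), w = z ∘ π := by
  have h1 : (∏ j, (Polynomial.X - Polynomial.C (z j))) = ∏ j, (Polynomial.X - Polynomial.C (w j)) := by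
    rw [← symPol_esymMap, ← symPol_esymMap, h]
  have h2 := congrArg Polynomial.roots h1
  have key : ∀ z : Fin N → ℂ, (∏ j, (Polynomial.X - Polynomial.C (z j))).roots
      = Finset.univ.val.map z := by
    intro z
    have := Polynomial.roots_multiset_prod_X_sub_C (Finset.univ.val.map z)
    rw [Multiset.map_map] at this
    exact this
  rw [key, key] at h2
  have h3 : ∀ v : ℂ, Nonempty ({i // w i = v} ≃ {i // z i = v}) := by
    intro v
    have h4 := congrArg (Multiset.count v) h2
    rw [Multiset.count_map, Multiset.count_map] at h4
    refine Fintype.card_eq.1 ?_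
    rw [Fintype.card_subtype, Fintype.card_subtype]
    simp only [eq_comm (a := v)] at h4
    exact h4.symm
  let e : ∀ v : ℂ, {i // w i = v} ≃ {i // z i = v} := fun v => (h3 v).some
  refine ⟨(Equiv.sigmaFiberEquiv w).symm.trans
    ((Equiv.sigmaCongrRight e).trans (Equiv.sigmaFiberEquiv z)), ?_⟩
  funext i
  exact (e (w i) ⟨i, rfl⟩).2.symm

theorem esymMap_perm (N : ℕ) (z : Fin N → ℂ) (π : Equiv.Perm (Fin N)) :
    esymMap N (z ∘ π) = esymMap N z := by
  apply symPol_inj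
  rw [symPol_esymMap, symPol_esymMap]
  exact Equiv.prod_comp π (fun j => Polynomial.X - Polynomial.C (z j))

theorem esymMap_continuous (N : ℕ) : Continuous (esymMap N) := by
  unfold esymMap esym
  fun_prop

theorem norm_le_of_esymMap (N : ℕ) (z : Fin N → ℂ) : ‖z‖ ≤ 1 + N * ‖esymMap N z‖ := by
  refine (pi_norm_le_iff_of_nonneg (by positivity)).2 fun j => ?_
  set s := esymMap N z
  by_cases hx : ‖z j‖ ≤ 1
  · have : 0 ≤ N * ‖s‖ := by positivity
    linarith
  push Not at hx
  have h0 : (symPol N s).eval (z j) = 0 := by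
    rw [symPol_eval_esymMap]; exact Finset.prod_eq_zero (Finset.mem_univ j) (sub_self _)
  rw [symPol_eval] at h0
  have h1 := eq_neg_of_add_eq_zero_left h0
  have h2 : ‖z j‖ ^ N ≤ N * ‖s‖ * ‖z j‖ ^ (N - 1) := by
    rw [← norm_pow, h1, norm_neg]
    refine (norm_sum_le _ _).trans ?_
    refine (Finset.sum_le_card_nsmul _ _ (‖s‖ * ‖z j‖ ^ (N - 1)) ?_).trans ?_
    · intro k _
      simp only [norm_mul, norm_pow, norm_neg, norm_one, one_pow, one_mul]
      exact mul_le_mul (norm_le_pi_norm s k) (pow_le_pow_right₀ hx.le (by omega))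
        (by positivity) (by positivity)
    · simp [mul_assoc]
  have hN : N = N - 1 + 1 := by have := j.2; omega
  have h3 : ‖z j‖ ^ N = ‖z j‖ * ‖z j‖ ^ (N - 1) := by
    conv_lhs => rw [hN, pow_succ']
  rw [h3] at h2
  have := le_of_mul_le_mul_right h2 (by positivity)
  linarith

theorem esymMap_isClosedMap (N : ℕ) : IsClosedMap (esymMap N) := by
  refine IsProperMap.isClosedMap (isProperMap_iff_isCompact_preimage.2
    ⟨esymMap_continuous N, fun K hK => ?_⟩)
  refine Metric.isCompact_of_isClosed_isBounded (hK.isClosed.preimage (esymMap_continuous N)) ?_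
  obtain ⟨M, hM⟩ := hK.isBounded.exists_norm_le
  refine isBounded_iff_forall_norm_le.2 ⟨1 + N * M, fun z hz => ?_⟩
  refine (norm_le_of_esymMap N z).trans ?_
  gcongr
  exact hM _ hz

theorem esymMap_isOpenMap (N : ℕ) : IsOpenMap (esymMap N) := by
  intro W hW
  have hW' : IsOpen (⋃ π : Equiv.Perm (Fin N), (fun z : Fin N → ℂ => z ∘ π) ⁻¹' W) := by
    refine isOpen_iUnion fun π => hW.preimage ?_
    fun_prop
  have h := (esymMap_isClosedMap N _ hW'.isClosed_compl).isOpen_compl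
  convert h using 1
  ext s
  constructor
  · rintro ⟨z, hz, rfl⟩ ⟨w, hw, hwz⟩
    apply hw
    obtain ⟨π, hπ⟩ := esymMap_eq_imp N hwz
    refine Set.mem_iUnion.2 ⟨π, ?_⟩
    rw [Set.mem_preimage, ← hπ]; exact hz
  · intro hs
    obtain ⟨z, rfl⟩ := esymMap_surj N s
    by_contra hcon
    refine hs ⟨z, fun hz => hcon ?_, rfl⟩
    obtain ⟨π, hπ⟩ := Set.mem_iUnion.1 hz
    exact ⟨_, hπ, esymMap_perm N z π⟩

theorem torusMap_mem_sphere {n : ℕ} (c : Fin n → ℂ) {r : ℝ} (hr : 0 < r) (θ : Fin n → ℝ) (i : Fin n) :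
    torusMap c (fun _ => r) θ i ∈ Metric.sphere (c i) r := by
  simp [torusMap, abs_of_pos hr]

theorem torusMap_cont {n : ℕ} (c : Fin n → ℂ) (r : ℝ) :
    Continuous (torusMap c (fun _ => r)) := by
  unfold torusMap; fun_prop

theorem torus_comp_cont {n : ℕ} (c : Fin n → ℂ) {r : ℝ} (hr : 0 < r) {F : (Fin n → ℂ) → ℂ}
    (hF : ContinuousOn F {z | ∀ i, z i ∈ Metric.sphere (c i) r}) :
    Continuous (fun θ => F (torusMap c (fun _ => r) θ)) :=
  hF.comp_continuous (torusMap_cont c r) (fun θ i => torusMap_mem_sphere c hr θ i)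

theorem torusIntegrable_of_cont {n : ℕ} (c : Fin n → ℂ) {r : ℝ} (hr : 0 < r) {F : (Fin n → ℂ) → ℂ}
    (hF : ContinuousOn F {z | ∀ i, z i ∈ Metric.sphere (c i) r}) :
    TorusIntegrable F c (fun _ => r) :=
  (torus_comp_cont c hr hF).continuousOn.integrableOn_compact isCompact_Icc

theorem cauchyKer_cont {n : ℕ} (c w : Fin n → ℂ) {r : ℝ} {f : (Fin n → ℂ) → ℂ}
    (hf : ContinuousOn f {z | ∀ i, z i ∈ Metric.sphere (c i) r})
    (hw : ∀ i, w i ∉ Metric.sphere (c i) r) :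
    ContinuousOn (fun x => (∏ i, (x i - w i)⁻¹) * f x) {z | ∀ i, z i ∈ Metric.sphere (c i) r} := by
  refine ContinuousOn.mul (continuousOn_finsetProd _ fun i _ => ?_) hf
  refine ContinuousOn.inv₀ (by fun_prop) fun z hz h => hw i ?_
  rw [← sub_eq_zero.1 h]; exact hz i

open Classical in
theorem torus_cauchy (n : ℕ) (c w : Fin n → ℂ) {r : ℝ} (hr : 0 < r) (f : (Fin n → ℂ) → ℂ)
    (hf : DifferentiableOn ℂ f {z | ∀ i, z i ∈ Metric.closedBall (c i) r})
    (hw : ∀ i, w i ∉ Metric.sphere (c i) r) :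
    torusIntegral (fun x => (∏ i, (x i - w i)⁻¹) * f x) c (fun _ => r) =
      if ∀ i, w i ∈ Metric.ball (c i) r then (2 * Real.pi * Complex.I) ^ n * f w else 0 := by
  induction n with
  | zero =>
    rw [torusIntegral_dim0]
    simp only [Finset.univ_eq_empty, Finset.prod_empty, one_mul, pow_zero]
    rw [if_pos (fun i => i.elim0), Subsingleton.elim c w]
  | succ n ih =>
    have hfs : ContinuousOn f {z | ∀ i, z i ∈ Metric.sphere (c i) r} :=
      hf.continuousOn.mono fun z hz i => Metric.sphere_subset_closedBall (hz i)
    rw [torusIntegral_succ (torusIntegrable_of_cont c hr (cauchyKer_cont c w hfs hw))]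
    have hcons : ∀ x ∈ Metric.closedBall (c 0) r, DifferentiableOn ℂ
        (fun y : Fin n → ℂ => f (Fin.cons x y))
        {z | ∀ i, z i ∈ Metric.closedBall ((c ∘ Fin.succ) i) r} := by
      intro x hx
      refine hf.comp (t := {z | ∀ i, z i ∈ Metric.closedBall (c i) r}) ?_ ?_
      · refine Differentiable.differentiableOn ?_
        rw [differentiable_pi]
        intro i
        refine Fin.cases ?_ (fun j => ?_) i <;> simp <;> fun_prop
      · intro y hy i
        refine Fin.cases ?_ (fun j => ?_) i
        · simpa using hx
        · simpa using hy j
    have hinner : Set.EqOn (fun x => torusIntegral (fun y : Fin n → ℂ =>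
          (∏ i, ((Fin.cons x y : Fin (n+1) → ℂ) i - w i)⁻¹) * f (Fin.cons x y)) (c ∘ Fin.succ)
            ((fun _ => r) ∘ Fin.succ))
        (fun x => (x - w 0)⁻¹ • (if ∀ i, (w ∘ Fin.succ) i ∈ Metric.ball ((c ∘ Fin.succ) i) r then
          (2 * Real.pi * Complex.I) ^ n * f (Fin.cons x (w ∘ Fin.succ)) else 0))
        (Metric.sphere (c 0) r) := by
      intro x hx
      have h1 := ih (c ∘ Fin.succ) (w ∘ Fin.succ) (fun y => f (Fin.cons x y))
        (hcons x (Metric.sphere_subset_closedBall hx)) (fun i => hw i.succ)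
      simp only [smul_eq_mul]
      rw [← h1, ← torusIntegral_const_mul]
      simp only [Fin.prod_univ_succ, Fin.cons_zero, Fin.cons_succ, mul_assoc]
      rfl
    rw [circleIntegral.integral_congr hr.le hinner]
    by_cases hs : ∀ i, (w ∘ Fin.succ) i ∈ Metric.ball ((c ∘ Fin.succ) i) r
    · simp only [if_pos hs]
      have hd : DifferentiableOn ℂ (fun x => (2 * Real.pi * Complex.I) ^ n *
          f (Fin.cons x (w ∘ Fin.succ))) (Metric.closedBall (c 0) r) := by
        refine DifferentiableOn.const_mul ?_ _
        refine hf.comp (t := {z | ∀ i, z i ∈ Metric.closedBall (c i) r})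
          (f := fun x : ℂ => (Fin.cons x (w ∘ Fin.succ) : Fin (n+1) → ℂ)) ?_ ?_
        · refine Differentiable.differentiableOn ?_
          rw [differentiable_pi]
          intro i
          refine Fin.cases ?_ (fun j => ?_) i <;> simp
        · intro x hx i
          refine Fin.cases ?_ (fun j => ?_) i
          · simpa using hx
          · simpa using Metric.ball_subset_closedBall (hs j)
      by_cases h0 : w 0 ∈ Metric.ball (c 0) r
      · rw [hd.circleIntegral_sub_inv_smul h0, if_pos (fun i => Fin.cases h0 hs i)]
        have : (Fin.cons (w 0) (w ∘ Fin.succ) : Fin (n+1) → ℂ) = w := by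
          funext i; refine Fin.cases ?_ (fun j => ?_) i <;> simp
        rw [this, pow_succ', smul_eq_mul, mul_assoc (2 * (Real.pi : ℂ) * Complex.I)]
      · rw [if_neg (fun h => h0 (h 0))]
        have h0' : w 0 ∉ Metric.closedBall (c 0) r := by
          intro h
          rw [← Metric.ball_union_sphere] at h
          exact h.elim h0 (hw 0)
        refine DiffContOnCl.circleIntegral_eq_zero hr.le ?_
        refine DifferentiableOn.diffContOnCl ?_
        refine DifferentiableOn.mono (t := Metric.closedBall (c 0) r) ?_
          Metric.closure_ball_subset_closedBall
        refine DifferentiableOn.smul (DifferentiableOn.inv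
          (differentiableOn_id.sub_const (w 0)) ?_) hd
        intro x hx h
        apply h0'
        rw [← sub_eq_zero.1 h]; exact hx
    · simp only [if_neg hs]
      rw [if_neg (fun h => hs fun i => h i.succ)]
      simp [circleIntegral]

theorem analytic_torus (N : ℕ) (c : Fin N → ℂ) {r : ℝ} (hr : 0 < r) (h : (Fin N → ℂ) → ℂ)
    (hh : ContinuousOn h {z | ∀ i, z i ∈ Metric.sphere (c i) r}) (s₀ : Fin N → ℂ)
    (hs : ∀ i, ∀ x ∈ Metric.sphere (c i) r, (symPol N s₀).eval x ≠ 0) :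
    AnalyticAt ℂ (fun s => torusIntegral
      (fun x => (∏ i, ((symPol N s).eval (x i))⁻¹) * h x) c (fun _ => r)) s₀ := by
  let T := Set.Icc (0 : Fin N → ℝ) (fun _ => 2 * Real.pi)
  have : CompactSpace T := isCompact_iff_compactSpace.1 isCompact_Icc
  let A : Fin N → C(T, ℂ) := fun i =>
    ⟨fun t => torusMap c (fun _ => r) t.1 i,
      (continuous_apply i).comp ((torusMap_cont c r).comp continuous_subtype_val)⟩
  let q : (Fin N → ℂ) → C(T, ℂ) := fun s =>
    ∏ i, ((A i) ^ N + ∑ k : Fin N, ((-1) ^ (k.val + 1) * s k) • (A i) ^ (N - 1 - k.val))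
  have hq : ∀ s t, q s t = ∏ i, (symPol N s).eval (A i t) := by
    intro s t
    simp [q, symPol_eval, ContinuousMap.prod_apply]
  let H : C(T, ℂ) := ⟨fun t => (∏ i, (r : ℂ) * Complex.exp (t.1 i * Complex.I) * Complex.I) *
    h (torusMap c (fun _ => r) t.1), by
      refine Continuous.mul (continuous_finsetProd _ fun i _ => ?_) ?_
      · have h1 : Continuous fun t : T => t.1 i := (continuous_apply i).comp continuous_subtype_val
        exact (continuous_const.mul ((((Complex.continuous_ofReal.comp h1).mul
          continuous_const)).cexp)).mul continuous_const
      · exact (torus_comp_cont c hr hh).comp continuous_subtype_val⟩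
  let μ : MeasureTheory.Measure T := MeasureTheory.Measure.comap Subtype.val MeasureTheory.volume
  have : MeasureTheory.IsFiniteMeasure μ := ⟨by
    rw [MeasureTheory.Measure.comap_apply _ Subtype.val_injective _ _ MeasurableSet.univ]
    · simp only [Set.image_univ, Subtype.range_coe_subtype, Set.ofPred_mem_eq]
      exact isCompact_Icc.measure_lt_top
    · intro s hs
      exact (MeasurableEmbedding.subtype_coe measurableSet_Icc).measurableSet_image.2 hs⟩
  have hint : ∀ u : C(T, ℂ), MeasureTheory.Integrable (fun t => u t) μ := fun u =>
    MeasureTheory.Integrable.of_bound (C := ‖u‖) u.continuous.aestronglyMeasurable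
      (Filter.Eventually.of_forall fun t => u.norm_coe_le_norm t)
  let L : C(T, ℂ) →L[ℂ] ℂ := LinearMap.mkContinuous
    { toFun := fun u => ∫ t, u t ∂μ
      map_add' := fun u v => by
        simpa using MeasureTheory.integral_add (hint u) (hint v)
      map_smul' := fun a u => by
        simpa using MeasureTheory.integral_const_mul a (fun t => u t) } (μ.real Set.univ) (by
      intro u
      have := MeasureTheory.norm_integral_le_of_norm_le_const (μ := μ) (f := fun t => u t) (C := ‖u‖)
        (Filter.Eventually.of_forall fun t => u.norm_coe_le_norm t)
      simpa [mul_comm] using this)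
  have hqa : AnalyticAt ℂ q s₀ := by
    refine Finset.analyticAt_fun_prod _ fun i _ => ?_
    refine AnalyticAt.add analyticAt_const ?_
    refine Finset.analyticAt_fun_sum _ fun k _ => ?_
    refine AnalyticAt.fun_smul (AnalyticAt.fun_mul analyticAt_const ?_) analyticAt_const
    exact (ContinuousLinearMap.proj (R := ℂ) (φ := fun _ : Fin N => ℂ) k).analyticAt s₀
  have hu : IsUnit (q s₀) := by
    rw [ContinuousMap.isUnit_iff_forall_ne_zero]
    intro t
    rw [hq]
    exact Finset.prod_ne_zero_iff.2 fun i _ => hs i _ (torusMap_mem_sphere c hr _ i)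
  have hinv : AnalyticAt ℂ (fun s => Ring.inverse (q s)) s₀ := by
    have h1 := analyticAt_inverse (𝕜 := ℂ) hu.unit
    rw [IsUnit.unit_spec] at h1
    exact AnalyticAt.comp (g := Ring.inverse) (f := q) h1 hqa
  have hmain : AnalyticAt ℂ (fun s => L (Ring.inverse (q s) * H)) s₀ :=
    AnalyticAt.comp (g := L) (f := fun s => Ring.inverse (q s) * H)
      (L.analyticAt _) (hinv.mul analyticAt_const)
  refine hmain.congr ?_
  have hev : ∀ᶠ s in nhds s₀, IsUnit (q s) :=
    hqa.continuousAt.eventually (Units.isOpen.mem_nhds hu)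
  filter_upwards [hev] with s hsu
  have hval : ∀ t, (Ring.inverse (q s)) t = (q s t)⁻¹ := by
    intro t
    have h1 := congrArg (fun u : C(T, ℂ) => u t) (Ring.inverse_mul_cancel (q s) hsu)
    exact eq_inv_of_mul_eq_one_left h1
  have hL : L (Ring.inverse (q s) * H) = ∫ t, (Ring.inverse (q s) * H) t ∂μ := rfl
  rw [hL, torusIntegral, ← MeasureTheory.integral_subtype_comap measurableSet_Icc]
  refine MeasureTheory.integral_congr_ae (Filter.Eventually.of_forall fun t => ?_)
  simp only [ContinuousMap.mul_apply, hval, hq, smul_eq_mul, Finset.prod_inv_distrib]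
  simp only [H, A, ContinuousMap.coe_mk]
  ring

/-- Off-diagonal factor `∏_{j ≠ i} (x i - x j)`. -/
def offDiag (N : ℕ) (x : Fin N → ℂ) (i : Fin N) : ℂ :=
  ∏ j ∈ Finset.univ.erase i, (x i - x j)

theorem offDiag_perm (N : ℕ) (x : Fin N → ℂ) (π : Equiv.Perm (Fin N)) (i : Fin N) :
    offDiag N (x ∘ π) i = offDiag N x (π i) := by
  unfold offDiag
  refine Finset.prod_equiv π ?_ ?_
  · intro j; simp
  · intro j _; rfl

theorem torusIntegral_congr' {n : ℕ} (c : Fin n → ℂ) {r : ℝ} (hr : 0 < r) {F G : (Fin n → ℂ) → ℂ}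
    (h : ∀ x, (∀ i, x i ∈ Metric.sphere (c i) r) → F x = G x) :
    torusIntegral F c (fun _ => r) = torusIntegral G c (fun _ => r) := by
  unfold torusIntegral
  congr 1
  funext θ
  rw [h _ fun i => torusMap_mem_sphere c hr θ i]

theorem torusIntegral_finsum {n : ℕ} {ι : Type*} (S : Finset ι) (c : Fin n → ℂ) {r : ℝ}
    (F : ι → (Fin n → ℂ) → ℂ)
    (h : ∀ i ∈ S, TorusIntegrable (F i) c (fun _ => r)) :
    torusIntegral (fun x => ∑ i ∈ S, F i x) c (fun _ => r) =
      ∑ i ∈ S, torusIntegral (F i) c (fun _ => r) := by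
  unfold torusIntegral
  simp only [Finset.smul_sum]
  exact MeasureTheory.integral_finsetSum _ fun i hi => (h i hi).function_integrable

theorem sep_not_mem {N : ℕ} {c z : Fin N → ℂ} {r : ℝ}
    (hsep : ∀ i j, c i ≠ c j → 2 * r < dist (c i) (c j))
    (hz : ∀ j, z j ∈ Metric.ball (c j) r) (i j : Fin N) (hij : c j ≠ c i) :
    z j ∉ Metric.closedBall (c i) r := by
  intro h
  have h1 := hsep j i hij
  have h2 := hz j
  rw [Metric.mem_ball] at h2
  rw [Metric.mem_closedBall] at h
  have := dist_triangle_left (c j) (c i) (z j)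
  linarith

theorem sep_not_sphere {N : ℕ} {c z : Fin N → ℂ} {r : ℝ}
    (hsep : ∀ i j, c i ≠ c j → 2 * r < dist (c i) (c j))
    (hz : ∀ j, z j ∈ Metric.ball (c j) r) (i j : Fin N) :
    z j ∉ Metric.sphere (c i) r := by
  by_cases hij : c j = c i
  · have := hz j
    rw [hij] at this
    intro h
    rw [Metric.mem_ball] at this
    rw [Metric.mem_sphere] at h
    linarith
  · exact fun h => sep_not_mem hsep hz i j hij (Metric.sphere_subset_closedBall h)

/-- Number of injective self-maps preserving the values of `c`. -/
def stabCount (N : ℕ) (c : Fin N → ℂ) : ℕ :=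
  by classical exact
  (Finset.univ.filter fun σ : Fin N → Fin N => Function.Injective σ ∧ ∀ i, c (σ i) = c i).card

theorem stabCount_ne_zero (N : ℕ) (c : Fin N → ℂ) : stabCount N c ≠ 0 := by
  classical
  unfold stabCount
  refine (Finset.card_pos.2 ⟨id, ?_⟩).ne'
  simp [Function.injective_id]

theorem inv_prod_eq_sum {N : ℕ} (hN : 1 ≤ N) (z : Fin N → ℂ) (hinj : Function.Injective z)
    (x : ℂ) (hx : ∀ i, x ≠ z i) :
    (∏ j, (x - z j))⁻¹ = ∑ j, (offDiag N z j)⁻¹ * (x - z j)⁻¹ := by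
  have hne : (Finset.univ : Finset (Fin N)).Nonempty := ⟨⟨0, hN⟩, Finset.mem_univ _⟩
  have h1 := Lagrange.eval_interpolate_not_at_node (s := Finset.univ) (v := z) (x := x) 1
    (fun i _ => hx i)
  rw [Lagrange.interpolate_one hinj.injOn hne, Polynomial.eval_one, Lagrange.eval_nodal] at h1
  simp only [Pi.one_apply, mul_one] at h1
  rw [inv_eq_of_mul_eq_one_right h1.symm]
  refine Finset.sum_congr rfl fun j _ => ?_
  simp [offDiag, Lagrange.nodalWeight, Finset.prod_inv_distrib]

theorem gloc_eq {N : ℕ} (hN : 1 ≤ N) {c z : Fin N → ℂ} {r : ℝ} (hr : 0 < r)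
    (hsep : ∀ i j, c i ≠ c j → 2 * r < dist (c i) (c j))
    (hz : ∀ j, z j ∈ Metric.ball (c j) r) (hinj : Function.Injective z) (f : (Fin N → ℂ) → ℂ)
    (hf : DifferentiableOn ℂ f {z | ∀ i, z i ∈ Metric.closedBall (c i) r})
    (hsym : ∀ π : Equiv.Perm (Fin N), f (z ∘ π) = f z) :
    torusIntegral (fun x => (∏ i, ((symPol N (esymMap N z)).eval (x i))⁻¹) *
      ((∏ i, offDiag N x i) * f x)) c (fun _ => r) =
      (stabCount N c) * ((2 * Real.pi * Complex.I) ^ N * f z) := by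
  classical
  have hF : DifferentiableOn ℂ (fun x => (∏ i, offDiag N x i) * f x)
      {z | ∀ i, z i ∈ Metric.closedBall (c i) r} := by
    refine DifferentiableOn.mul (Differentiable.differentiableOn ?_) hf
    unfold offDiag
    fun_prop
  have hFc : ContinuousOn (fun x => (∏ i, offDiag N x i) * f x)
      {z | ∀ i, z i ∈ Metric.sphere (c i) r} :=
    hF.continuousOn.mono fun z hz i => Metric.sphere_subset_closedBall (hz i)
  have h1 : ∀ x : Fin N → ℂ, (∀ i, x i ∈ Metric.sphere (c i) r) →
      (∏ i, ((symPol N (esymMap N z)).eval (x i))⁻¹) * ((∏ i, offDiag N x i) * f x) =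
      ∑ σ : Fin N → Fin N, (∏ i, (offDiag N z (σ i))⁻¹) *
        ((∏ i, (x i - (z ∘ σ) i)⁻¹) * ((∏ i, offDiag N x i) * f x)) := by
    intro x hx
    have h2 : ∀ i, ((symPol N (esymMap N z)).eval (x i))⁻¹ =
        ∑ j, (offDiag N z j)⁻¹ * (x i - z j)⁻¹ := by
      intro i
      rw [symPol_eval_esymMap]
      refine inv_prod_eq_sum hN z hinj _ fun j h => sep_not_sphere hsep hz i j ?_
      rw [← h]; exact hx i
    simp only [h2]
    rw [Finset.prod_univ_sum, Fintype.piFinset_univ, Finset.sum_mul]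
    refine Finset.sum_congr rfl fun σ _ => ?_
    rw [Finset.prod_mul_distrib, mul_assoc]
    rfl
  rw [torusIntegral_congr' c hr h1, torusIntegral_finsum]
  · simp only [torusIntegral_const_mul]
    have h3 : ∀ σ : Fin N → Fin N, (∏ i, (offDiag N z (σ i))⁻¹) *
        torusIntegral (fun x => (∏ i, (x i - (z ∘ σ) i)⁻¹) * ((∏ i, offDiag N x i) * f x))
          c (fun _ => r) = if Function.Injective σ ∧ ∀ i, c (σ i) = c i then
            (2 * Real.pi * Complex.I) ^ N * f z else 0 := by
      intro σ
      rw [torus_cauchy N c (z ∘ σ) hr _ hF (fun i => sep_not_sphere hsep hz i (σ i))]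
      by_cases hc : ∀ i, c (σ i) = c i
      · rw [if_pos (fun i => by rw [← hc i]; exact hz (σ i))]
        by_cases hi : Function.Injective σ
        · rw [if_pos ⟨hi, hc⟩]
          obtain ⟨π, rfl⟩ : ∃ π : Equiv.Perm (Fin N), σ = π :=
            ⟨Equiv.ofBijective σ (Finite.injective_iff_bijective.1 hi), rfl⟩
          rw [hsym]
          simp only [offDiag_perm]
          have h4 : (∏ i, (offDiag N z (π i))⁻¹) * ∏ i, offDiag N z (π i) = 1 := by
            rw [← Finset.prod_mul_distrib]
            refine Finset.prod_eq_one fun i _ => inv_mul_cancel₀ ?_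
            refine Finset.prod_ne_zero_iff.2 fun j hj => sub_ne_zero.2 fun h => ?_
            exact (Finset.mem_erase.1 hj).1 (hinj h).symm
          linear_combination ((2 * Real.pi * Complex.I) ^ N * f z) * h4
        · rw [if_neg (fun h => hi h.1)]
          have h5 : ∏ i, offDiag N (z ∘ σ) i = 0 := by
            simp only [Function.Injective, not_forall] at hi
            obtain ⟨a, b, hab, hne⟩ := hi
            refine Finset.prod_eq_zero (Finset.mem_univ a) ?_
            refine Finset.prod_eq_zero (i := b) (by simp [Ne.symm hne]) ?_
            simp [hab]
          rw [h5]; ring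
      · suffices hnb : ¬ ∀ i, (z ∘ σ) i ∈ Metric.ball (c i) r by
          rw [if_neg hnb, if_neg (fun h => hc h.2), mul_zero]
        intro h
        apply hc
        intro i
        by_contra hne
        exact sep_not_mem hsep hz i (σ i) hne (Metric.ball_subset_closedBall (h i))
    simp only [h3]
    rw [← Finset.sum_filter, Finset.sum_const, nsmul_eq_mul]
    rfl
  · intro σ _
    refine torusIntegrable_of_cont c hr (ContinuousOn.mul continuousOn_const ?_)
    exact cauchyKer_cont c (z ∘ σ) hFc (fun i => sep_not_sphere hsep hz i (σ i))

theorem eventually_injective {N : ℕ} (z : Fin N → ℂ) :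
    ∀ᶠ t : ℂ in nhdsWithin 0 {0}ᶜ, Function.Injective (fun i : Fin N => z i + t * (i.val : ℂ)) := by
  have h : ∀ i j : Fin N, i ≠ j → ∀ᶠ t : ℂ in nhdsWithin 0 {0}ᶜ,
      z i + t * (i.val : ℂ) ≠ z j + t * (j.val : ℂ) := by
    intro i j hij
    have hd : (i.val : ℂ) - j.val ≠ 0 := by
      rw [sub_ne_zero]; exact_mod_cast fun h => hij (Fin.ext h)
    by_cases hz : z i = z j
    · filter_upwards [self_mem_nhdsWithin] with t ht h
      rw [hz] at h
      have : t * ((i.val : ℂ) - j.val) = 0 := by linear_combination h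
      exact (mul_eq_zero.1 this).elim ht hd
    · have hc : ContinuousAt (fun t : ℂ => z i + t * (i.val : ℂ) - (z j + t * (j.val : ℂ))) 0 := by
        fun_prop
      have := hc.eventually_ne (y := 0) (by simpa [sub_eq_zero] using hz)
      exact (this.filter_mono nhdsWithin_le_nhds).mono fun t ht => sub_ne_zero.1 ht
  have h2 : ∀ᶠ t : ℂ in nhdsWithin 0 {0}ᶜ, ∀ i j : Fin N, i ≠ j →
      z i + t * (i.val : ℂ) ≠ z j + t * (j.val : ℂ) := by
    rw [Filter.eventually_all]; intro i
    rw [Filter.eventually_all]; intro j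
    by_cases hij : i = j
    · exact Filter.Eventually.of_forall fun t h => absurd hij h
    · exact (h i j hij).mono fun t ht _ => ht
  filter_upwards [h2] with t ht i j hij
  by_contra hne
  exact ht i j hne hij

theorem local_factor {N : ℕ} (hN : 1 ≤ N) {U : Set ℂ} (hU : IsOpen U)
    (f : (Fin N → ℂ) → ℂ)
    (hf : AnalyticOnNhd ℂ f {z : Fin N → ℂ | ∀ j, z j ∈ U})
    (hsym : ∀ (π : Equiv.Perm (Fin N)) (z : Fin N → ℂ), (∀ j, z j ∈ U) →
      f (z ∘ π) = f z) (c : Fin N → ℂ) (hc : ∀ j, c j ∈ U) :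
    ∃ (W : Set (Fin N → ℂ)) (G : (Fin N → ℂ) → ℂ), IsOpen W ∧ c ∈ W ∧
      (∀ z ∈ W, ∀ j, z j ∈ U) ∧ AnalyticAt ℂ G (esymMap N c) ∧
      ∀ z ∈ W, f z = G (esymMap N z) := by
  have hr1 : ∀ᶠ r : ℝ in nhdsWithin 0 (Set.Ioi 0), ∀ i, Metric.closedBall (c i) r ⊆ U := by
    rw [Filter.eventually_all]; intro i
    obtain ⟨ε, hε, hb⟩ := Metric.isOpen_iff.1 hU (c i) (hc i)
    filter_upwards [Ioo_mem_nhdsGT hε] with r hr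
    exact (Metric.closedBall_subset_ball hr.2).trans hb
  have hr2 : ∀ᶠ r : ℝ in nhdsWithin 0 (Set.Ioi 0), ∀ i j, c i ≠ c j → 2 * r < dist (c i) (c j) := by
    rw [Filter.eventually_all]; intro i
    rw [Filter.eventually_all]; intro j
    by_cases hij : c i = c j
    · exact Filter.Eventually.of_forall fun t h => absurd hij h
    · filter_upwards [Ioo_mem_nhdsGT (half_pos (dist_pos.2 hij))] with r hr _
      have := hr.2
      linarith
  obtain ⟨r, ⟨hrU, hsep⟩, hr⟩ := ((hr1.and hr2).and self_mem_nhdsWithin).exists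
  replace hr : 0 < r := hr
  have hfd : DifferentiableOn ℂ f {z | ∀ i, z i ∈ Metric.closedBall (c i) r} := fun z hz =>
    (hf z fun j => hrU j (hz j)).differentiableAt.differentiableWithinAt
  have hFc : ContinuousOn (fun x => (∏ i, offDiag N x i) * f x)
      {z | ∀ i, z i ∈ Metric.sphere (c i) r} := by
    refine ContinuousOn.mul (Continuous.continuousOn ?_)
      (hfd.continuousOn.mono fun z hz i => Metric.sphere_subset_closedBall (hz i))
    unfold offDiag
    fun_prop
  set K : ℂ := (stabCount N c : ℂ) * (2 * Real.pi * Complex.I) ^ N with hK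
  have hK0 : K ≠ 0 := mul_ne_zero (Nat.cast_ne_zero.2 (stabCount_ne_zero N c))
    (pow_ne_zero _ Complex.two_pi_I_ne_zero)
  let W : Set (Fin N → ℂ) := {z | ∀ j, z j ∈ Metric.ball (c j) r}
  have hWo : IsOpen W := by
    have : W = ⋂ j, (fun z : Fin N → ℂ => z j) ⁻¹' Metric.ball (c j) r := by
      ext z; simp [W]
    rw [this]
    exact isOpen_iInter_of_finite fun j => Metric.isOpen_ball.preimage (continuous_apply j)
  have hWU : ∀ z ∈ W, ∀ j, z j ∈ U := fun z hz j =>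
    hrU j (Metric.ball_subset_closedBall (hz j))
  let G : (Fin N → ℂ) → ℂ := fun s => K⁻¹ * torusIntegral
    (fun x => (∏ i, ((symPol N s).eval (x i))⁻¹) * ((∏ i, offDiag N x i) * f x)) c (fun _ => r)
  have hG : ∀ z ∈ W, AnalyticAt ℂ G (esymMap N z) := by
    intro z hz
    refine AnalyticAt.fun_mul analyticAt_const (analytic_torus N c hr _ hFc _ ?_)
    intro i x hx
    rw [symPol_eval_esymMap]
    refine Finset.prod_ne_zero_iff.2 fun j _ => sub_ne_zero.2 fun h => ?_
    exact sep_not_sphere hsep hz i j (h ▸ hx)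
  have hinjeq : ∀ z ∈ W, Function.Injective z → f z = G (esymMap N z) := by
    intro z hz hzi
    have := gloc_eq hN hr hsep hz hzi f hfd fun π => hsym π z (hWU z hz)
    simp only [G]
    rw [this, ← mul_assoc (stabCount N c : ℂ), ← hK, ← mul_assoc, inv_mul_cancel₀ hK0, one_mul]
  have hcW : c ∈ W := fun j => Metric.mem_ball_self hr
  refine ⟨W, G, hWo, hcW, hWU, hG c hcW, fun z hz => ?_⟩
  let p : ℂ → Fin N → ℂ := fun t i => z i + t * (i.val : ℂ)
  have hp0 : p 0 = z := by funext i; simp [p]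
  have hp : Filter.Tendsto p (nhdsWithin 0 {0}ᶜ) (nhds z) := by
    have : Continuous p := by
      refine continuous_pi fun i => ?_
      simp only [p]; fun_prop
    have h := this.tendsto 0
    rw [hp0] at h
    exact h.mono_left nhdsWithin_le_nhds
  have t1 : Filter.Tendsto (fun t => f (p t)) (nhdsWithin 0 {0}ᶜ) (nhds (f z)) :=
    (hf z (hWU z hz)).continuousAt.tendsto.comp hp
  have t2 : Filter.Tendsto (fun t => G (esymMap N (p t))) (nhdsWithin 0 {0}ᶜ)
      (nhds (G (esymMap N z))) :=
    (hG z hz).continuousAt.tendsto.comp (((esymMap_continuous N).tendsto z).comp hp)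
  refine tendsto_nhds_unique (t1.congr' ?_) t2
  filter_upwards [eventually_injective z, hp.eventually (hWo.mem_nhds hz)] with t ht1 ht2
  exact hinjeq _ ht2 ht1

/-- holomorphic factorization of symmetric analytic functions. If
`f : U^N → ℂ` is analytic and invariant under permutations of its coordinates, then
`S = e(U^N)` is open and there is an analytic `g : S → ℂ` with `f = g ∘ e` on `U^N`. -/
theorem statement19 (N : ℕ) (hN : 1 ≤ N) (U : Set ℂ) (hU : IsOpen U)
    (f : (Fin N → ℂ) → ℂ)
    (hf : AnalyticOnNhd ℂ f {z : Fin N → ℂ | ∀ j, z j ∈ U})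
    (hsym : ∀ (π : Equiv.Perm (Fin N)) (z : Fin N → ℂ), (∀ j, z j ∈ U) →
      f (z ∘ π) = f z) :
    IsOpen (esymMap N '' {z : Fin N → ℂ | ∀ j, z j ∈ U}) ∧
    ∃ g : (Fin N → ℂ) → ℂ,
      AnalyticOnNhd ℂ g (esymMap N '' {z : Fin N → ℂ | ∀ j, z j ∈ U}) ∧
      ∀ z : Fin N → ℂ, (∀ j, z j ∈ U) → f z = g (esymMap N z) := by
  classical
  constructor
  · refine esymMap_isOpenMap N _ ?_
    have : {z : Fin N → ℂ | ∀ j, z j ∈ U} = ⋂ j, (fun z : Fin N → ℂ => z j) ⁻¹' U := by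
      ext z; simp
    rw [this]
    exact isOpen_iInter_of_finite fun j => hU.preimage (continuous_apply j)
  let g : (Fin N → ℂ) → ℂ := fun s =>
    if h : ∃ z : Fin N → ℂ, (∀ j, z j ∈ U) ∧ esymMap N z = s then f h.choose else 0
  have hg : ∀ z : Fin N → ℂ, (∀ j, z j ∈ U) → f z = g (esymMap N z) := by
    intro z hz
    have h : ∃ w : Fin N → ℂ, (∀ j, w j ∈ U) ∧ esymMap N w = esymMap N z := ⟨z, hz, rfl⟩
    simp only [g]
    rw [dif_pos h]
    obtain ⟨π, hπ⟩ := esymMap_eq_imp N h.choose_spec.2.symm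
    conv_rhs => rw [hπ]
    exact (hsym π z hz).symm
  refine ⟨g, ?_, hg⟩
  rintro _ ⟨c, hc, rfl⟩
  obtain ⟨W, G, hWo, hcW, hWU, hG, hfG⟩ := local_factor hN hU f hf hsym c hc
  refine hG.congr ?_
  filter_upwards [(esymMap_isOpenMap N W hWo).mem_nhds ⟨c, hcW, rfl⟩] with s hs
  obtain ⟨z, hz, rfl⟩ := hs
  rw [← hfG z hz, hg z (hWU z hz)]
end
end
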